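/- arXiv:1511.06099 — 4 statements merged into one kernel-verified Lean document; each statement's English description precedes it below -/
import Mathlib

section
/- There is an absolute constant c > 0 such that the following holds for every integer n ≥ 2 and every real ε with 1/√n < ε < 1. Suppose (R, ρ, ske, est) is a randomized sketching scheme of size m bits for simple unweighted graphs on vertex set {1,...,n} such that for every such graph G, with probability at least 3/4 over a seed r drawn from ρ, simultaneously for every subset S ⊆ {1,...,n} the value est(S, ske(G,r), r) lies in the interval [(1−ε)·|∂_G(S,S̄)|, (1+ε)·|∂_G(S,S̄)|]. Then m ≥ c·n/ε². -/
open scoped Classical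

/-- Number of edges of `G` with exactly one endpoint in `S` (each crossing edge
counted once, as the ordered pair with first coordinate in `S`). -/
noncomputable def cutSize {n : ℕ} (G : SimpleGraph (Fin n)) (S : Finset (Fin n)) : ℕ :=
  (Finset.univ.filter (fun p : Fin n × Fin n => p.1 ∈ S ∧ p.2 ∉ S ∧ G.Adj p.1 p.2)).card

namespace CutSketch

/-- The sign vector of a set. -/
noncomputable def sg {α : Type*} (T : Finset α) (j : α) : ℝ := if j ∈ T then 1 else -1

lemma moments {α : Type*} (d : α → ℝ) (s : Finset α) :
    (∑ T ∈ s.powerset, (∑ j ∈ s, d j * sg T j) ^ 2 = 2 ^ s.card * ∑ j ∈ s, d j ^ 2) ∧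
    (∑ T ∈ s.powerset, (∑ j ∈ s, d j * sg T j) ^ 4 ≤
      2 ^ s.card * (3 * (∑ j ∈ s, d j ^ 2) ^ 2)) := by
  induction s using Finset.induction_on with
  | empty => simp
  | insert a s ha ih =>
    obtain ⟨h2, h4⟩ := ih
    have e1 : ∀ T ∈ s.powerset, ∑ j ∈ insert a s, d j * sg T j
        = (∑ j ∈ s, d j * sg T j) - d a := by
      intro T hT
      rw [Finset.mem_powerset] at hT
      rw [Finset.sum_insert ha]
      have : sg T a = -1 := by
        unfold sg; rw [if_neg (fun h => ha (hT h))]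
      rw [this]; ring
    have e2 : ∀ T ∈ s.powerset, ∑ j ∈ insert a s, d j * sg (insert a T) j
        = (∑ j ∈ s, d j * sg T j) + d a := by
      intro T hT
      rw [Finset.sum_insert ha]
      have h1 : sg (insert a T) a = 1 := by
        unfold sg; simp
      have h3 : ∑ j ∈ s, d j * sg (insert a T) j = ∑ j ∈ s, d j * sg T j := by
        apply Finset.sum_congr rfl
        intro j hj
        have : j ≠ a := fun h => ha (h ▸ hj)
        unfold sg
        simp [this]
      rw [h1, h3]; ring
    have key : ∀ p : ℕ, ∑ T ∈ (insert a s).powerset, (∑ j ∈ insert a s, d j * sg T j) ^ p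
        = ∑ T ∈ s.powerset, (((∑ j ∈ s, d j * sg T j) - d a) ^ p
          + ((∑ j ∈ s, d j * sg T j) + d a) ^ p) := by
      intro p
      rw [Finset.sum_powerset_insert ha, Finset.sum_add_distrib]
      congr 1
      · apply Finset.sum_congr rfl
        intro T hT
        rw [e1 T hT]
      · apply Finset.sum_congr rfl
        intro T hT
        rw [e2 T hT]
    rw [key, key, Finset.card_insert_of_notMem ha, Finset.sum_insert ha]
    constructor
    · have : ∀ T ∈ s.powerset, (((∑ j ∈ s, d j * sg T j) - d a) ^ 2
          + ((∑ j ∈ s, d j * sg T j) + d a) ^ 2)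
          = 2 * (∑ j ∈ s, d j * sg T j) ^ 2 + 2 * d a ^ 2 := by
        intro T _; ring
      rw [Finset.sum_congr rfl this, Finset.sum_add_distrib, ← Finset.mul_sum, h2]
      simp [Finset.card_powerset]
      ring
    · have : ∀ T ∈ s.powerset, (((∑ j ∈ s, d j * sg T j) - d a) ^ 4
          + ((∑ j ∈ s, d j * sg T j) + d a) ^ 4)
          = 2 * (∑ j ∈ s, d j * sg T j) ^ 4
            + 12 * d a ^ 2 * (∑ j ∈ s, d j * sg T j) ^ 2 + 2 * d a ^ 4 := by
        intro T _; ring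
      rw [Finset.sum_congr rfl this, Finset.sum_add_distrib, Finset.sum_add_distrib,
        ← Finset.mul_sum, ← Finset.mul_sum, h2]
      simp only [Finset.sum_const, Finset.card_powerset, nsmul_eq_mul]
      push_cast
      have hp : (0:ℝ) ≤ 2 ^ s.card * d a ^ 4 := by positivity
      rw [pow_succ (2 : ℝ) s.card]
      nlinarith [h4, hp]

lemma abs_lower (s t : ℝ) (hs : 0 < s) : t ^ 2 / s - t ^ 4 / (4 * s ^ 3) ≤ |t| := by
  have h1 : t ^ 2 = |t| ^ 2 := (sq_abs t).symm
  have h2 : t ^ 4 = |t| ^ 4 := by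
    rw [show t ^ 4 = (t ^ 2) ^ 2 by ring, h1]; ring
  rw [h1, h2]
  have hu : 0 ≤ |t| := abs_nonneg t
  generalize |t| = u at hu
  have : u - (u ^ 2 / s - u ^ 4 / (4 * s ^ 3)) = u * (4 * s ^ 3 - 4 * u * s ^ 2 + u ^ 3) / (4 * s ^ 3) := by
    field_simp
    ring
  have h3 : 0 ≤ 4 * s ^ 3 - 4 * u * s ^ 2 + u ^ 3 := by
    nlinarith [mul_nonneg hu (sq_nonneg (u - s)), mul_nonneg hs.le (sq_nonneg (2 * u - 3 * s)),
      mul_nonneg hs.le (sq_nonneg (u - s)), mul_nonneg hu (sq_nonneg (2 * u - 3 * s)),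
      mul_nonneg hs.le (sq_nonneg (u - 2 * s)), pow_pos hs 3, pow_nonneg hu 3]
  have : 0 ≤ u - (u ^ 2 / s - u ^ 4 / (4 * s ^ 3)) := by
    rw [this]; positivity
  linarith

lemma exists_big (k : ℕ) (hk : 0 < k) (D : Fin k → Fin k → ℝ) (hD : ∀ i j, D i j ^ 2 ≤ 1)
    (hsum : (k : ℝ) ^ 2 / 4 ≤ ∑ i, ∑ j, D i j ^ 2) :
    ∃ T : Finset (Fin k), (k : ℝ) * Real.sqrt k / 16 ≤ ∑ i, |∑ j, D i j * sg T j| := by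
  have hk' : (0 : ℝ) < k := by exact_mod_cast hk
  set s := Real.sqrt k with hs
  have hs0 : 0 < s := Real.sqrt_pos.mpr hk'
  have hss : s ^ 2 = k := Real.sq_sqrt hk'.le
  have hrow : ∀ i, (2 : ℝ) ^ k * ((∑ j, D i j ^ 2) / (4 * s)) ≤
      ∑ T ∈ (Finset.univ : Finset (Fin k)).powerset, |∑ j, D i j * sg T j| := by
    intro i
    obtain ⟨h2, h4⟩ := moments (D i) Finset.univ
    rw [Finset.card_univ, Fintype.card_fin] at h2 h4
    have hd : ∑ j, D i j ^ 2 ≤ s ^ 2 := by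
      calc ∑ j, D i j ^ 2 ≤ ∑ j : Fin k, (1:ℝ) := Finset.sum_le_sum (fun j _ => hD i j)
        _ = s ^ 2 := by simp [hss]
    have hd0 : 0 ≤ ∑ j, D i j ^ 2 := Finset.sum_nonneg (fun j _ => sq_nonneg _)
    calc (2 : ℝ) ^ k * ((∑ j, D i j ^ 2) / (4 * s))
        ≤ (2 ^ k * ∑ j, D i j ^ 2) / s
          - (2 ^ k * (3 * (∑ j, D i j ^ 2) ^ 2)) / (4 * s ^ 3) := by
          generalize ∑ j, D i j ^ 2 = d at hd hd0
          have : (2 ^ k * d) / s - (2 ^ k * (3 * d ^ 2)) / (4 * s ^ 3)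
              - 2 ^ k * (d / (4 * s)) = 2 ^ k * (3 * d * (s ^ 2 - d)) / (4 * s ^ 3) := by
            field_simp
            ring
          have h0 : 0 ≤ s ^ 2 - d := by linarith
          have : 0 ≤ (2 ^ k * d) / s - (2 ^ k * (3 * d ^ 2)) / (4 * s ^ 3)
              - 2 ^ k * (d / (4 * s)) := by rw [this]; positivity
          linarith
      _ ≤ (∑ T ∈ (Finset.univ : Finset (Fin k)).powerset, (∑ j, D i j * sg T j) ^ 2) / s
          - (∑ T ∈ (Finset.univ : Finset (Fin k)).powerset, (∑ j, D i j * sg T j) ^ 4)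
            / (4 * s ^ 3) := by
          rw [h2]
          gcongr
      _ = ∑ T ∈ (Finset.univ : Finset (Fin k)).powerset,
          ((∑ j, D i j * sg T j) ^ 2 / s - (∑ j, D i j * sg T j) ^ 4 / (4 * s ^ 3)) := by
          rw [Finset.sum_sub_distrib, Finset.sum_div, Finset.sum_div]
      _ ≤ _ := Finset.sum_le_sum (fun T _ => abs_lower s _ hs0)
  have hall : ∑ T ∈ (Finset.univ : Finset (Fin k)).powerset, ((k : ℝ) * s / 16)
      ≤ ∑ T ∈ (Finset.univ : Finset (Fin k)).powerset, ∑ i, |∑ j, D i j * sg T j| := by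
    rw [Finset.sum_comm]
    refine le_trans ?_ (Finset.sum_le_sum (fun i _ => hrow i))
    rw [← Finset.mul_sum, Finset.sum_const, Finset.card_powerset,
      Finset.card_univ, Fintype.card_fin, nsmul_eq_mul]
    push_cast
    refine mul_le_mul_of_nonneg_left ?_ (by positivity)
    rw [← Finset.sum_div]
    rw [le_div_iff₀ (by positivity)]
    have : (k : ℝ) * s / 16 * (4 * s) = k * s ^ 2 / 4 := by ring
    rw [this, hss]
    linarith
  obtain ⟨T, -, hT⟩ := Finset.exists_le_of_sum_le ⟨∅, by simp⟩ hall
  exact ⟨T, hT⟩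

/-- Cut value inside one bipartite block. -/
noncomputable def cutB {k : ℕ} (A : Finset (Fin k × Fin k)) (X Y : Finset (Fin k)) : ℕ :=
  (A.filter (fun p => ¬ (p.1 ∈ X ↔ p.2 ∈ Y))).card

lemma cutB_eq {k : ℕ} (A : Finset (Fin k × Fin k)) (X Y : Finset (Fin k)) :
    (cutB A X Y : ℝ) = ∑ i, ∑ j, (if (i, j) ∈ A then (1:ℝ) else 0) * ((1 - sg X i * sg Y j) / 2) := by
  rw [← Finset.sum_product', cutB, Finset.card_filter]
  push_cast
  rw [Finset.univ_product_univ]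
  simp only [Prod.mk.eta, ite_mul, zero_mul, one_mul]
  rw [Finset.sum_ite_mem, Finset.univ_inter]
  apply Finset.sum_congr rfl
  intro p _
  unfold sg
  by_cases h1 : p.1 ∈ X <;> by_cases h2 : p.2 ∈ Y <;> simp [h1, h2]

lemma cutB_le {k : ℕ} (A : Finset (Fin k × Fin k)) (X Y : Finset (Fin k)) :
    (cutB A X Y : ℝ) ≤ (k : ℝ) ^ 2 := by
  have h : cutB A X Y ≤ k ^ 2 := by
    refine (Finset.card_le_univ _).trans ?_
    simp [sq]
  exact_mod_cast h

lemma block_distinguish {k : ℕ} (hk : 0 < k) {ε : ℝ} (hε : 0 < ε) (hεk : 64 * ε * Real.sqrt k < 1)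
    (A B : Finset (Fin k × Fin k)) (hAB : (k : ℝ) ^ 2 / 4 ≤ ((symmDiff A B).card : ℝ))
    (h : ∀ X Y, (1 - ε) * (cutB A X Y : ℝ) ≤ (1 + ε) * cutB B X Y ∧
      (1 - ε) * (cutB B X Y : ℝ) ≤ (1 + ε) * cutB A X Y) : False := by
  have hk' : (0 : ℝ) < k := by exact_mod_cast hk
  set D : Fin k → Fin k → ℝ := fun i j =>
    (if (i, j) ∈ A then (1:ℝ) else 0) - (if (i, j) ∈ B then (1:ℝ) else 0) with hDdef
  have hD2 : ∀ i j, D i j ^ 2 = if (i, j) ∈ symmDiff A B then (1:ℝ) else 0 := by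
    intro i j
    simp only [hDdef, Finset.mem_symmDiff]
    by_cases h1 : (i, j) ∈ A <;> by_cases h2 : (i, j) ∈ B <;> simp [h1, h2]
  obtain ⟨T, hT⟩ := exists_big k hk D
    (fun i j => by rw [hD2]; split_ifs <;> norm_num)
    (by
      refine hAB.trans (le_of_eq ?_)
      simp only [hD2]
      rw [← Finset.sum_product', Finset.univ_product_univ]
      simp)
  set row : Fin k → ℝ := fun i => ∑ j, D i j * sg T j with hrow
  set X : Finset (Fin k) := Finset.univ.filter (fun i => 0 ≤ row i) with hX
  have hdiff : ∀ Z, (cutB A Z T : ℝ) - cutB B Z T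
      = (∑ i, ∑ j, D i j) / 2 - (∑ i, sg Z i * row i) / 2 := by
    intro Z
    rw [cutB_eq, cutB_eq, ← Finset.sum_sub_distrib, Finset.sum_div, Finset.sum_div,
      ← Finset.sum_sub_distrib]
    apply Finset.sum_congr rfl
    intro i _
    rw [hrow]
    simp only
    rw [← Finset.sum_sub_distrib, Finset.mul_sum, Finset.sum_div, Finset.sum_div,
      ← Finset.sum_sub_distrib]
    apply Finset.sum_congr rfl
    intro j _
    simp only [hDdef]
    ring
  have hQ1 : ∑ i, sg X i * row i = ∑ i, |row i| := by
    apply Finset.sum_congr rfl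
    intro i _
    unfold sg
    by_cases h0 : 0 ≤ row i
    · simp [hX, h0, abs_of_nonneg h0]
    · simp [hX, h0, abs_of_neg (not_le.mp h0)]
  have hQ2 : ∑ i, sg Xᶜ i * row i = - ∑ i, |row i| := by
    rw [← hQ1, ← Finset.sum_neg_distrib]
    apply Finset.sum_congr rfl
    intro i _
    unfold sg
    by_cases h0 : i ∈ X <;> simp [h0]
  have d1 := hdiff X
  have d2 := hdiff Xᶜ
  rw [hQ1] at d1
  rw [hQ2] at d2
  have a1 := h X T
  have a2 := h Xᶜ T
  have b1 := mul_le_mul_of_nonneg_left (cutB_le A X T) hε.le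
  have b2 := mul_le_mul_of_nonneg_left (cutB_le B X T) hε.le
  have b3 := mul_le_mul_of_nonneg_left (cutB_le A Xᶜ T) hε.le
  have b4 := mul_le_mul_of_nonneg_left (cutB_le B Xᶜ T) hε.le
  have hQ : ∑ i, |row i| ≤ 4 * (ε * (k : ℝ) ^ 2) := by
    nlinarith [a1.1, a1.2, a2.1, a2.2]
  have hfin : (k : ℝ) * Real.sqrt k / 16 ≤ 4 * (ε * (k : ℝ) ^ 2) := hT.trans hQ
  have hs0 : 0 < Real.sqrt k := Real.sqrt_pos.mpr hk'
  have hss : Real.sqrt k * Real.sqrt k = k := Real.mul_self_sqrt hk'.le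
  have : (64 * ε * Real.sqrt k) * (k * Real.sqrt k) < 1 * (k * Real.sqrt k) :=
    mul_lt_mul_of_pos_right hεk (by positivity)
  have e : (64 * ε * Real.sqrt k) * (k * Real.sqrt k) = 64 * (ε * (k:ℝ) ^ 2) := by
    rw [show (64 * ε * Real.sqrt k) * (k * Real.sqrt k)
      = 64 * ε * k * (Real.sqrt k * Real.sqrt k) by ring, hss]; ring
  linarith

/-- Gilbert–Varshamov. -/
lemma exists_code (β : Type) [Fintype β] :
    ∃ C : Finset (Finset β), 2 ^ Fintype.card β ≤ C.card ^ 8 ∧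
      ∀ A ∈ C, ∀ B ∈ C, A ≠ B → (Fintype.card β : ℝ) / 4 ≤ ((symmDiff A B).card : ℝ) := by
  set N := Fintype.card β with hN
  let P : Finset (Finset β) → Prop := fun C =>
    ∀ A ∈ C, ∀ B ∈ C, A ≠ B → (N : ℝ) / 4 ≤ ((symmDiff A B).card : ℝ)
  obtain ⟨C, hC, hmax⟩ := Finset.exists_max_image
    (Finset.univ.filter P) Finset.card ⟨∅, by simp [P]⟩
  rw [Finset.mem_filter] at hC
  refine ⟨C, ?_, hC.2⟩
  let W : Finset (Finset β) := Finset.univ.filter (fun T => 4 * T.card ≤ N)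
  have hcover : ∀ U : Finset β, ∃ A ∈ C, symmDiff A U ∈ W := by
    intro U
    by_contra hcon
    push Not at hcon
    have hfar : ∀ A ∈ C, (N : ℝ) / 4 ≤ ((symmDiff A U).card : ℝ) := by
      intro A hA
      have := hcon A hA
      simp only [W, Finset.mem_filter, Finset.mem_univ, true_and, not_le] at this
      have h' : (N : ℝ) < 4 * ((symmDiff A U).card : ℝ) := by exact_mod_cast this
      linarith
    have hU : U ∉ C := by
      intro hU
      have := hcon U hU
      simp [W] at this
    have hP : P (insert U C) := by
      intro A hA B hB hne
      rw [Finset.mem_insert] at hA hB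
      rcases hA with rfl | hA <;> rcases hB with rfl | hB
      · exact absurd rfl hne
      · rw [symmDiff_comm]; exact hfar B hB
      · exact hfar A hA
      · exact hC.2 A hA B hB hne
    have := hmax (insert U C) (by simp [hP])
    rw [Finset.card_insert_of_notMem hU] at this
    omega
  have hcount : 2 ^ N ≤ C.card * W.card := by
    have hsub : (Finset.univ : Finset (Finset β)) ⊆
        (C ×ˢ W).image (fun p => symmDiff p.1 p.2) := by
      intro U _
      obtain ⟨A, hA, hW⟩ := hcover U
      rw [Finset.mem_image]
      exact ⟨(A, symmDiff A U), by simp [hA, hW], by simp⟩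
    have h1 := Finset.card_le_card hsub
    have h2 := Finset.card_image_le (s := C ×ˢ W) (f := fun p => symmDiff p.1 p.2)
    rw [Finset.card_univ, Fintype.card_finset] at h1
    rw [Finset.card_product] at h2
    exact h1.trans h2
  have hW4 : W.card ^ 4 * 16 ^ N ≤ 162 ^ N := by
    have hgen : ∑ T : Finset β, 2 ^ (N - T.card) = 3 ^ N := by
      have := Finset.sum_pow_mul_eq_add_pow (1 : ℕ) 2 (Finset.univ : Finset β)
      rw [Finset.powerset_univ, Finset.card_univ] at this
      simpa using this
    have h1 : ∀ T ∈ W, 2 ^ (3 * N) ≤ (2 ^ (N - T.card)) ^ 4 := by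
      intro T hT
      simp only [W, Finset.mem_filter, Finset.mem_univ, true_and] at hT
      rw [← pow_mul]
      apply Nat.pow_le_pow_right (by norm_num)
      omega
    by_cases hWe : W = ∅
    · simp [hWe]
    obtain ⟨T0, hT0, hmin⟩ := Finset.exists_min_image W (fun T => 2 ^ (N - T.card))
      (Finset.nonempty_iff_ne_empty.mpr hWe)
    have h2 : W.card * 2 ^ (N - T0.card) ≤ 3 ^ N := by
      rw [← hgen, ← smul_eq_mul]
      exact (Finset.card_nsmul_le_sum W _ _ hmin).trans
        (Finset.sum_le_sum_of_subset (Finset.subset_univ _))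
    have h3 : W.card ^ 4 * 8 ^ N ≤ 81 ^ N := by
      calc W.card ^ 4 * 8 ^ N = W.card ^ 4 * 2 ^ (3 * N) := by rw [pow_mul]; norm_num
        _ ≤ W.card ^ 4 * (2 ^ (N - T0.card)) ^ 4 := Nat.mul_le_mul_left _ (h1 T0 hT0)
        _ = (W.card * 2 ^ (N - T0.card)) ^ 4 := by rw [mul_pow]
        _ ≤ (3 ^ N) ^ 4 := Nat.pow_le_pow_left h2 4
        _ = 81 ^ N := by rw [← pow_mul, mul_comm, pow_mul]; norm_num
    calc W.card ^ 4 * 16 ^ N = (W.card ^ 4 * 8 ^ N) * 2 ^ N := by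
          rw [mul_assoc, ← mul_pow]; norm_num
      _ ≤ 81 ^ N * 2 ^ N := Nat.mul_le_mul_right _ h3
      _ = 162 ^ N := by rw [← mul_pow]; norm_num
  have h8 : 2 ^ N * 162 ^ (2 * N) ≤ C.card ^ 8 * 162 ^ (2 * N) := by
    calc 2 ^ N * 162 ^ (2 * N) = (2 * 162 ^ 2) ^ N := by rw [mul_pow, pow_mul]
      _ ≤ (256 * 16 ^ 2) ^ N := Nat.pow_le_pow_left (by norm_num) N
      _ = (2 ^ N) ^ 8 * (16 ^ N) ^ 2 := by
          rw [mul_pow, ← pow_mul, ← pow_mul, ← pow_mul, mul_comm N 8, pow_mul 2 8 N,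
            mul_comm N 2]; norm_num
      _ ≤ (C.card * W.card) ^ 8 * (16 ^ N) ^ 2 := by gcongr
      _ = C.card ^ 8 * (W.card ^ 4 * 16 ^ N) ^ 2 := by ring
      _ ≤ C.card ^ 8 * (162 ^ N) ^ 2 := by gcongr
      _ = C.card ^ 8 * 162 ^ (2 * N) := by rw [← pow_mul, mul_comm N 2]
  exact Nat.le_of_mul_le_mul_right h8 (by positivity)

/-- Block graph. -/
def blockGraph {n b k : ℕ} (φ : Fin b × (Fin k ⊕ Fin k) ↪ Fin n)
    (f : Fin b → Finset (Fin k × Fin k)) : SimpleGraph (Fin n) where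
  Adj u v := ∃ t i j, (i, j) ∈ f t ∧
    ((u = φ (t, Sum.inl i) ∧ v = φ (t, Sum.inr j)) ∨
      (u = φ (t, Sum.inr j) ∧ v = φ (t, Sum.inl i)))
  symm := ⟨by
    rintro u v ⟨t, i, j, h, h'⟩
    exact ⟨t, i, j, h, by tauto⟩⟩
  loopless := ⟨by
    rintro u ⟨t, i, j, h, ⟨h1, h2⟩ | ⟨h1, h2⟩⟩ <;>
    · rw [h1] at h2
      have := φ.injective h2
      simp at this⟩

/-- The vertex set of a block cut. -/
noncomputable def blockSet {n b k : ℕ} (φ : Fin b × (Fin k ⊕ Fin k) ↪ Fin n) (t : Fin b)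
    (X Y : Finset (Fin k)) : Finset (Fin n) :=
  X.image (fun i => φ (t, Sum.inl i)) ∪ Y.image (fun j => φ (t, Sum.inr j))

lemma mem_blockSet_inl {n b k : ℕ} (φ : Fin b × (Fin k ⊕ Fin k) ↪ Fin n) (t t' : Fin b)
    (X Y : Finset (Fin k)) (i : Fin k) :
    φ (t', Sum.inl i) ∈ blockSet φ t X Y ↔ t' = t ∧ i ∈ X := by
  simp [blockSet]
  aesop

lemma mem_blockSet_inr {n b k : ℕ} (φ : Fin b × (Fin k ⊕ Fin k) ↪ Fin n) (t t' : Fin b)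
    (X Y : Finset (Fin k)) (j : Fin k) :
    φ (t', Sum.inr j) ∈ blockSet φ t X Y ↔ t' = t ∧ j ∈ Y := by
  simp [blockSet]
  aesop

lemma cutSize_block {n b k : ℕ} (φ : Fin b × (Fin k ⊕ Fin k) ↪ Fin n)
    (f : Fin b → Finset (Fin k × Fin k)) (t : Fin b) (X Y : Finset (Fin k)) :
    cutSize (blockGraph φ f) (blockSet φ t X Y) = cutB (f t) X Y := by
  symm
  unfold cutSize cutB
  apply Finset.card_bij (fun p _ => if p.1 ∈ X then (φ (t, Sum.inl p.1), φ (t, Sum.inr p.2))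
    else (φ (t, Sum.inr p.2), φ (t, Sum.inl p.1)))
  · rintro ⟨i, j⟩ hp
    simp only [Finset.mem_filter] at hp
    obtain ⟨hA, hx⟩ := hp
    by_cases hi : i ∈ X
    · have hj : j ∉ Y := by tauto
      simp only [hi, if_true, Finset.mem_filter, Finset.mem_univ, true_and, mem_blockSet_inl,
        mem_blockSet_inr, hj, not_false_eq_true, and_false]
      exact ⟨t, i, j, hA, Or.inl ⟨rfl, rfl⟩⟩
    · have hj : j ∈ Y := by tauto
      simp only [hi, if_false, Finset.mem_filter, Finset.mem_univ, true_and, mem_blockSet_inl,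
        mem_blockSet_inr, hj, not_false_eq_true, and_false]
      exact ⟨t, i, j, hA, Or.inr ⟨rfl, rfl⟩⟩
  · rintro ⟨i, j⟩ _ ⟨i', j'⟩ _ heq
    by_cases hi : i ∈ X <;> by_cases hi' : i' ∈ X <;> simp [hi, hi'] at heq ⊢ <;> tauto
  · rintro ⟨u, v⟩ huv
    simp only [Finset.mem_filter, Finset.mem_univ, true_and] at huv
    obtain ⟨hu, hv, t', i, j, hA, ⟨rfl, rfl⟩ | ⟨rfl, rfl⟩⟩ := huv
    · rw [mem_blockSet_inl] at hu
      obtain ⟨rfl, hi⟩ := hu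
      rw [mem_blockSet_inr] at hv
      have hj : j ∉ Y := by tauto
      exact ⟨(i, j), by simp [hA, hi, hj], by simp [hi]⟩
    · rw [mem_blockSet_inr] at hu
      obtain ⟨rfl, hj⟩ := hu
      rw [mem_blockSet_inl] at hv
      have hi : i ∉ X := by tauto
      exact ⟨(i, j), by simp [hA, hi, hj], by simp [hi]⟩

lemma exists_embedding {n b k : ℕ} (h : b * (2 * k) ≤ n) :
    Nonempty (Fin b × (Fin k ⊕ Fin k) ↪ Fin n) := by
  apply Function.Embedding.nonempty_of_card_le
  simp only [Fintype.card_prod, Fintype.card_sum, Fintype.card_fin]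
  rw [← two_mul]; exact h

/-- Counting argument. -/
lemma counting {n : ℕ} {ε : ℝ} {m : ℕ} {R : Type} [Fintype R] (ρ : R → ℝ)
    (hρ : ∀ r, 0 ≤ ρ r) (hρ1 : (∑ r : R, ρ r) = 1)
    (ske : SimpleGraph (Fin n) → R → (Fin m → Bool))
    (est : Finset (Fin n) → (Fin m → Bool) → R → ℝ)
    (hgood : ∀ G : SimpleGraph (Fin n),
            (3 : ℝ) / 4 ≤
              ∑ r ∈ Finset.univ.filter (fun r : R =>
                ∀ S : Finset (Fin n),
                  (1 - ε) * (cutSize G S : ℝ) ≤ est S (ske G r) r ∧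
                    est S (ske G r) r ≤ (1 + ε) * (cutSize G S : ℝ)), ρ r)
    {ι : Type} [Fintype ι] (g : ι → SimpleGraph (Fin n))
    (hinc : ∀ i j, (∀ S, (1 - ε) * (cutSize (g i) S : ℝ) ≤ (1 + ε) * cutSize (g j) S ∧
      (1 - ε) * (cutSize (g j) S : ℝ) ≤ (1 + ε) * cutSize (g i) S) → i = j) :
    3 * Fintype.card ι ≤ 4 * 2 ^ m := by
  let good : ι → R → Prop := fun i r => ∀ S : Finset (Fin n),
    (1 - ε) * (cutSize (g i) S : ℝ) ≤ est S (ske (g i) r) r ∧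
      est S (ske (g i) r) r ≤ (1 + ε) * (cutSize (g i) S : ℝ)
  have h1 : (Fintype.card ι : ℝ) * (3 / 4) ≤ ∑ i, ∑ r, (if good i r then ρ r else 0) := by
    rw [← nsmul_eq_mul, ← Finset.card_univ]
    apply Finset.card_nsmul_le_sum
    intro i _
    rw [← Finset.sum_filter]
    exact hgood (g i)
  have h2 : ∀ r, ∑ i, (if good i r then ρ r else 0) ≤ ρ r * 2 ^ m := by
    intro r
    rw [← Finset.sum_filter, Finset.sum_const, nsmul_eq_mul, mul_comm]
    apply mul_le_mul_of_nonneg_left _ (hρ r)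
    have : (Finset.univ.filter (fun i => good i r)).card
        ≤ (Finset.univ : Finset (Fin m → Bool)).card := by
      apply Finset.card_le_card_of_injOn (fun i => ske (g i) r) (fun _ _ => Finset.mem_univ _)
      intro i hi j hj hij
      simp only [Finset.coe_filter, Finset.mem_univ, true_and, Set.mem_ofPred_eq] at hi hj hij
      apply hinc
      intro S
      have a := hi S
      have b := hj S
      rw [hij] at a
      exact ⟨a.1.trans b.2, b.1.trans a.2⟩
    have h' : (Finset.univ : Finset (Fin m → Bool)).card = 2 ^ m := by simp
    rw [h'] at this
    exact_mod_cast this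
  rw [Finset.sum_comm] at h1
  have h3 := h1.trans (Finset.sum_le_sum (fun r _ => h2 r))
  rw [← Finset.sum_mul, hρ1] at h3
  have : (3 : ℝ) * Fintype.card ι ≤ 4 * 2 ^ m := by linarith
  exact_mod_cast this

end CutSketch

open CutSketch in
theorem stmt_0 :
    ∃ c : ℝ, 0 < c ∧
      ∀ (n : ℕ), 2 ≤ n → ∀ ε : ℝ, 1 / Real.sqrt n < ε → ε < 1 →
      ∀ (m : ℕ) (R : Type) [Fintype R] (ρ : R → ℝ),
        (∀ r, 0 ≤ ρ r) → (∑ r : R, ρ r) = 1 →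
        ∀ (ske : SimpleGraph (Fin n) → R → (Fin m → Bool))
          (est : Finset (Fin n) → (Fin m → Bool) → R → ℝ),
          (∀ G : SimpleGraph (Fin n),
            (3 : ℝ) / 4 ≤
              ∑ r ∈ Finset.univ.filter (fun r : R =>
                ∀ S : Finset (Fin n),
                  (1 - ε) * (cutSize G S : ℝ) ≤ est S (ske G r) r ∧
                    est S (ske G r) r ≤ (1 + ε) * (cutSize G S : ℝ)), ρ r) →
          c * n / ε ^ 2 ≤ (m : ℝ) := by
  refine ⟨1 / 10000000, by norm_num, ?_⟩
  intro n hn ε hε1 hε2 m R _ ρ hρ hρ1 ske est hgood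
  have hn0 : (0 : ℝ) < n := by exact_mod_cast (by omega : 0 < n)
  have hsn : 0 < Real.sqrt n := Real.sqrt_pos.mpr hn0
  have hε : 0 < ε := lt_trans (by positivity) hε1
  have hε2n : 1 < ε ^ 2 * n := by
    have h1 : 1 < ε * Real.sqrt n := by rwa [div_lt_iff₀ hsn] at hε1
    have h2 : (ε * Real.sqrt n) ^ 2 = ε ^ 2 * n := by rw [mul_pow, Real.sq_sqrt hn0.le]
    rw [← h2]
    nlinarith
  have hm1 : n / 2 ≤ m := by
    obtain ⟨φ⟩ := exists_embedding (n := n) (b := n / 2) (k := 1) (by omega)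
    have := counting ρ hρ hρ1 ske est hgood (ι := Fin (n / 2) → Finset (Fin 1 × Fin 1))
      (fun f => blockGraph φ f) (by
        intro f g h
        funext t
        have h' := h (blockSet φ t Finset.univ ∅)
        simp only [cutSize_block] at h'
        have hc : ∀ A : Finset (Fin 1 × Fin 1), cutB A Finset.univ ∅ = A.card := by
          intro A
          unfold cutB
          rw [Finset.filter_true_of_mem]
          intro p _
          simp only [Finset.mem_univ, Finset.notMem_empty, iff_false, not_true_eq_false,
            not_false_eq_true]
        rw [hc, hc] at h'
        by_contra hne
        have key : ∀ A : Finset (Fin 1 × Fin 1), A = ∅ ∨ A = Finset.univ := by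
          intro A
          rcases A.eq_empty_or_nonempty with h | ⟨x, hx⟩
          · exact Or.inl h
          · right
            ext y
            simp [Subsingleton.elim y x, hx]
        rcases key (f t) with h1 | h1 <;> rcases key (g t) with h2 | h2
        · exact hne (h1.trans h2.symm)
        · rw [h1, h2] at h'; simp at h'; linarith
        · rw [h1, h2] at h'; simp at h'; linarith
        · exact hne (h1.trans h2.symm))
    simp only [Fintype.card_fun, Fintype.card_finset, Fintype.card_prod, Fintype.card_fin] at this
    norm_num at this
    by_contra hlt
    push Not at hlt
    have : 2 ^ (m + 1) ≤ 2 ^ (n / 2) := Nat.pow_le_pow_right (by norm_num) hlt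
    have : 0 < 2 ^ m := by positivity
    rw [pow_succ] at *
    omega
  have hm1' : (n : ℝ) ≤ 3 * m := by
    have : n ≤ 3 * m := by omega
    exact_mod_cast this
  rw [div_le_iff₀ (by positivity)]
  by_cases hcase : 1 < 10000 * ε ^ 2
  · nlinarith
  push Not at hcase
  set k := ⌊1 / (10000 * ε ^ 2)⌋₊ with hk
  have hx1 : 1 ≤ 1 / (10000 * ε ^ 2) := by rw [le_div_iff₀ (by positivity)]; linarith
  have hk1 : 1 ≤ k := Nat.le_floor (by exact_mod_cast hx1)
  have hkle : (k : ℝ) ≤ 1 / (10000 * ε ^ 2) := Nat.floor_le (by positivity)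
  have hkgt : 1 / (10000 * ε ^ 2) < k + 1 := Nat.lt_floor_add_one _
  rw [le_div_iff₀ (by positivity)] at hkle
  rw [div_lt_iff₀ (by positivity)] at hkgt
  have hk1' : (1 : ℝ) ≤ k := by exact_mod_cast hk1
  have hk0 : 0 < k := hk1
  have h2k : 2 * k ≤ n := by
    have : (2 : ℝ) * k ≤ n := by
      by_contra hcon
      push Not at hcon
      nlinarith [mul_lt_mul_of_pos_left hcon (show 0 < ε ^ 2 by positivity)]
    exact_mod_cast this
  set b := n / (2 * k) with hb
  have hbn : b * (2 * k) ≤ n := Nat.div_mul_le_self _ _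
  have hb1 : 1 ≤ b := (Nat.one_le_div_iff (by omega)).mpr h2k
  have hbn2 : n ≤ 4 * (b * k) := by
    have h1 : n < (b + 1) * (2 * k) := by
      rw [hb]; have := Nat.lt_mul_div_succ n (show 0 < 2 * k by omega)
      rw [mul_comm]; exact this
    nlinarith
  obtain ⟨φ⟩ := exists_embedding hbn
  obtain ⟨C, hC, hdist⟩ := exists_code (Fin k × Fin k)
  have hcard : Fintype.card (Fin k × Fin k) = k ^ 2 := by simp [sq]
  rw [hcard] at hC hdist
  have hεk : 64 * ε * Real.sqrt k < 1 := by
    have h0 : 0 ≤ 64 * ε * Real.sqrt k := by positivity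
    have h1 : (64 * ε * Real.sqrt k) ^ 2 = 4096 * (k * ε ^ 2) := by
      rw [mul_pow, Real.sq_sqrt (by positivity)]; ring
    by_contra hcon
    push Not at hcon
    nlinarith
  have hcnt := counting ρ hρ hρ1 ske est hgood (ι := Fin b → C)
    (fun f => blockGraph φ (fun t => (f t : Finset (Fin k × Fin k)))) (by
      intro f g h
      funext t
      by_contra hne
      have hne' : (f t : Finset (Fin k × Fin k)) ≠ g t := fun h => hne (Subtype.ext h)
      apply block_distinguish hk0 hε hεk (f t) (g t)
      · have := hdist _ (f t).2 _ (g t).2 hne'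
        push_cast at this
        convert this using 3
        ext x
        simp only [Finset.mem_symmDiff]
      · intro X Y
        have := h (blockSet φ t X Y)
        simpa only [cutSize_block] using this)
  simp only [Fintype.card_fun, Fintype.card_coe, Fintype.card_fin] at hcnt
  have hlow : 2 ^ (k ^ 2 * b) ≤ (C.card ^ b) ^ 8 := by
    rw [pow_mul, ← pow_mul C.card, mul_comm b 8, pow_mul C.card]
    exact Nat.pow_le_pow_left hC b
  have hup : C.card ^ b ≤ 2 ^ (m + 1) := by
    rw [pow_succ]
    have : 0 < 2 ^ m := by positivity
    omega
  have hexp : k ^ 2 * b ≤ 8 * (m + 1) := by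
    have : 2 ^ (k ^ 2 * b) ≤ 2 ^ ((m + 1) * 8) := by
      rw [pow_mul 2 (m + 1) 8]
      exact hlow.trans (Nat.pow_le_pow_left hup 8)
    have := (Nat.pow_le_pow_iff_right (by norm_num)).mp this
    omega
  have hm16 : k * n ≤ 64 * m := by
    have hmpos : 1 ≤ m := by omega
    have : k * n ≤ k * (4 * (b * k)) := Nat.mul_le_mul_left _ hbn2
    nlinarith
  have hm16' : (k : ℝ) * n ≤ 64 * m := by exact_mod_cast hm16
  have hq : 1 ≤ 20000 * (k * ε ^ 2) := by nlinarith [sq_nonneg ε]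
  have hq2 : (n : ℝ) ≤ 20000 * (k * ε ^ 2) * n := by nlinarith
  have hq3 : ε ^ 2 * (k * n) ≤ ε ^ 2 * (64 * m) := mul_le_mul_of_nonneg_left hm16' (by positivity)
  nlinarith
end

section
/- There is an absolute constant c > 0 such that for every integer n ≥ 2 and every real ε with 1/√n < ε < 1, there exists a simple unweighted graph G on n vertices with the following property: every weighted graph H on the same vertex set (with nonnegative real edge weights, not required to be a subgraph of G) satisfying, for every subset S of the vertices, |∂_G(S,S̄)|/(1+ε) ≤ w_H(S,S̄) ≤ (1+ε)·|∂_G(S,S̄)|, must have at least c·n/ε² edges of positive weight. -/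
open scoped Classical

/-- Total weight of the edges of the weighted graph `w` with exactly one endpoint in `S`
(each unordered crossing edge counted once). -/
noncomputable def cutW {n : ℕ} (w : Fin n → Fin n → ℝ) (S : Finset (Fin n)) : ℝ :=
  ∑ p ∈ Finset.univ.filter (fun p : Fin n × Fin n => p.1 ∈ S ∧ p.2 ∉ S), w p.1 p.2

/-- signed sum -/
noncomputable def sgnSum {ι : Type} (s : Finset ι) (a : ι → ℝ) (T : Finset ι) : ℝ :=
  ∑ j ∈ s, (if j ∈ T then a j else - a j)

lemma sgnSum_insert_mem {ι : Type} {s : Finset ι} {x : ι} (hx : x ∉ s) (a : ι → ℝ)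
    (T : Finset ι) :
    sgnSum (insert x s) a (insert x T) = sgnSum s a T + a x := by
  unfold sgnSum
  rw [Finset.sum_insert hx]
  have : ∑ j ∈ s, (if j ∈ insert x T then a j else - a j)
      = ∑ j ∈ s, (if j ∈ T then a j else - a j) := by
    apply Finset.sum_congr rfl
    intro j hj
    have : j ≠ x := fun h => hx (h ▸ hj)
    simp [Finset.mem_insert, this]
  rw [this]
  simp [add_comm]

lemma sgnSum_insert_not {ι : Type} {s : Finset ι} {x : ι} (hx : x ∉ s) (a : ι → ℝ)
    (T : Finset ι) (hT : T ⊆ s) :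
    sgnSum (insert x s) a T = sgnSum s a T - a x := by
  unfold sgnSum
  rw [Finset.sum_insert hx]
  have : x ∉ T := fun h => hx (hT h)
  simp [this]; ring

lemma moments {ι : Type} (a : ι → ℝ) (s : Finset ι) :
    ∑ T ∈ s.powerset, sgnSum s a T ^ 2 = 2 ^ s.card * ∑ j ∈ s, a j ^ 2 ∧
    ∑ T ∈ s.powerset, sgnSum s a T ^ 4 ≤ 3 * 2 ^ s.card * (∑ j ∈ s, a j ^ 2) ^ 2 := by
  induction s using Finset.induction_on with
  | empty => simp [sgnSum]
  | insert x s hx ih =>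
    obtain ⟨h2, h4⟩ := ih
    have key : ∀ p : ℕ, ∑ T ∈ (insert x s).powerset, sgnSum (insert x s) a T ^ p
        = ∑ T ∈ s.powerset, ((sgnSum s a T - a x) ^ p + (sgnSum s a T + a x) ^ p) := by
      intro p
      rw [Finset.sum_powerset_insert hx, ← Finset.sum_add_distrib]
      apply Finset.sum_congr rfl
      intro T hT
      rw [sgnSum_insert_mem hx, sgnSum_insert_not hx a T (Finset.mem_powerset.mp hT)]
    have e2 : ∑ T ∈ s.powerset, ((sgnSum s a T - a x) ^ 2 + (sgnSum s a T + a x) ^ 2)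
        = 2 * ∑ T ∈ s.powerset, sgnSum s a T ^ 2 + 2 ^ s.card * (2 * a x ^ 2) := by
      rw [Finset.mul_sum]
      have : (2:ℝ) ^ s.card * (2 * a x ^ 2) = ∑ T ∈ s.powerset, 2 * a x ^ 2 := by
        simp [Finset.card_powerset]
      rw [this, ← Finset.sum_add_distrib]
      apply Finset.sum_congr rfl
      intro T _; ring
    have e4 : ∑ T ∈ s.powerset, ((sgnSum s a T - a x) ^ 4 + (sgnSum s a T + a x) ^ 4)
        = 2 * ∑ T ∈ s.powerset, sgnSum s a T ^ 4
          + (12 * a x ^ 2) * ∑ T ∈ s.powerset, sgnSum s a T ^ 2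
          + 2 ^ s.card * (2 * a x ^ 4) := by
      rw [Finset.mul_sum, Finset.mul_sum]
      have : (2:ℝ) ^ s.card * (2 * a x ^ 4) = ∑ T ∈ s.powerset, 2 * a x ^ 4 := by
        simp [Finset.card_powerset]
      rw [this, ← Finset.sum_add_distrib, ← Finset.sum_add_distrib]
      apply Finset.sum_congr rfl
      intro T _; ring
    rw [key, key, e2, e4, h2, Finset.card_insert_of_notMem hx, Finset.sum_insert hx,
      pow_succ 2 s.card]
    refine ⟨by ring, ?_⟩
    have hp : (0:ℝ) ≤ 2 ^ s.card * a x ^ 4 := by positivity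
    nlinarith [h4, hp]

/-- Khintchine, L1 version. -/
lemma khintchine {ι : Type} (a : ι → ℝ) (s : Finset ι) :
    2 ^ s.card * (9 / 16 * Real.sqrt (∑ j ∈ s, a j ^ 2)) ≤
      ∑ T ∈ s.powerset, |sgnSum s a T| := by
  obtain ⟨h2, h4⟩ := moments a s
  set V := ∑ j ∈ s, a j ^ 2 with hV
  have hV0 : 0 ≤ V := Finset.sum_nonneg (fun _ _ => sq_nonneg _)
  rcases hV0.eq_or_lt with h0 | hpos
  · rw [← h0]; simp only [Real.sqrt_zero, mul_zero]
    exact Finset.sum_nonneg (fun _ _ => abs_nonneg _)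
  set σ := Real.sqrt V with hσ
  have hσp : 0 < σ := Real.sqrt_pos.mpr hpos
  have hσ2 : σ ^ 2 = V := Real.sq_sqrt hV0
  have pt : ∀ x : ℝ, 3 / 4 / σ * x ^ 2 - 1 / 16 / σ ^ 3 * x ^ 4 ≤ |x| := by
    intro x
    have hx : x ^ 2 = |x| ^ 2 := (sq_abs x).symm
    have hx4 : x ^ 4 = |x| ^ 4 := by
      rw [show x ^ 4 = (x^2)^2 by ring, hx]; ring
    rw [hx, hx4]
    have ht : 0 ≤ |x| := abs_nonneg x
    generalize |x| = t at ht
    have : t - (3 / 4 / σ * t ^ 2 - 1 / 16 / σ ^ 3 * t ^ 4)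
        = t * (t - 2 * σ) ^ 2 * (t + 4 * σ) / (16 * σ ^ 3) := by
      field_simp; ring
    have h3 : 0 ≤ t * (t - 2 * σ) ^ 2 * (t + 4 * σ) / (16 * σ ^ 3) := by positivity
    linarith
  calc 2 ^ s.card * (9 / 16 * σ)
      = 3 / 4 / σ * (2 ^ s.card * V) - 1 / 16 / σ ^ 3 * (3 * 2 ^ s.card * V ^ 2) := by
        rw [← hσ2]; field_simp; ring
    _ ≤ 3 / 4 / σ * (∑ T ∈ s.powerset, sgnSum s a T ^ 2)
        - 1 / 16 / σ ^ 3 * (∑ T ∈ s.powerset, sgnSum s a T ^ 4) := by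
        rw [h2]; gcongr
    _ = ∑ T ∈ s.powerset, (3 / 4 / σ * sgnSum s a T ^ 2 - 1 / 16 / σ ^ 3 * sgnSum s a T ^ 4) := by
        rw [Finset.sum_sub_distrib, Finset.mul_sum, Finset.mul_sum]
    _ ≤ _ := Finset.sum_le_sum (fun T _ => pt _)

/-- If all sub-rectangle sums are small, then sum of row norms is small. -/
lemma rows_bound {ι : Type} (M : ι → ι → ℝ) (L R : Finset ι) (δ : ℝ)
    (h : ∀ A ⊆ L, ∀ B ⊆ R, |∑ i ∈ A, ∑ j ∈ B, M i j| ≤ δ) :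
    ∑ i ∈ L, 9 / 16 * Real.sqrt (∑ j ∈ R, M i j ^ 2) ≤ 4 * δ := by
  have hT : ∀ T ∈ R.powerset, ∑ i ∈ L, |sgnSum R (M i) T| ≤ 4 * δ := by
    intro T hT
    have hT := Finset.mem_powerset.mp hT
    have hs : ∀ i, sgnSum R (M i) T = ∑ j ∈ T, M i j - ∑ j ∈ R \ T, M i j := by
      intro i
      unfold sgnSum
      rw [← Finset.sum_sdiff hT]
      have h1 : ∑ j ∈ R \ T, (if j ∈ T then M i j else - M i j) = ∑ j ∈ R \ T, - M i j :=
        Finset.sum_congr rfl (fun j hj => by simp [(Finset.mem_sdiff.mp hj).2])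
      have h2 : ∑ j ∈ T, (if j ∈ T then M i j else - M i j) = ∑ j ∈ T, M i j :=
        Finset.sum_congr rfl (fun j hj => by simp [hj])
      rw [h1, h2, Finset.sum_neg_distrib]; ring
    rw [← Finset.sum_filter_add_sum_filter_not L (fun i => 0 ≤ sgnSum R (M i) T)]
    set A := L.filter (fun i => 0 ≤ sgnSum R (M i) T)
    set A' := L.filter (fun i => ¬ 0 ≤ sgnSum R (M i) T)
    have hA : ∑ i ∈ A, |sgnSum R (M i) T|
        = ∑ i ∈ A, ∑ j ∈ T, M i j - ∑ i ∈ A, ∑ j ∈ R \ T, M i j := by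
      rw [← Finset.sum_sub_distrib]
      apply Finset.sum_congr rfl
      intro i hi
      rw [abs_of_nonneg (Finset.mem_filter.mp hi).2, hs]
    have hA' : ∑ i ∈ A', |sgnSum R (M i) T|
        = ∑ i ∈ A', ∑ j ∈ R \ T, M i j - ∑ i ∈ A', ∑ j ∈ T, M i j := by
      rw [← Finset.sum_sub_distrib]
      apply Finset.sum_congr rfl
      intro i hi
      rw [abs_of_neg (not_le.mp (Finset.mem_filter.mp hi).2), hs]; ring
    rw [hA, hA']
    have a1 := abs_le.mp (h A (Finset.filter_subset _ _) T hT)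
    have a2 := abs_le.mp (h A (Finset.filter_subset _ _) (R \ T) Finset.sdiff_subset)
    have a3 := abs_le.mp (h A' (Finset.filter_subset _ _) T hT)
    have a4 := abs_le.mp (h A' (Finset.filter_subset _ _) (R \ T) Finset.sdiff_subset)
    linarith [a1.1, a1.2, a2.1, a2.2, a3.1, a3.2, a4.1, a4.2]
  have hsum := Finset.sum_le_sum hT
  rw [Finset.sum_comm, Finset.sum_const, Finset.card_powerset, nsmul_eq_mul] at hsum
  have hk : ∑ i ∈ L, 2 ^ R.card * (9 / 16 * Real.sqrt (∑ j ∈ R, M i j ^ 2))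
      ≤ ∑ i ∈ L, ∑ T ∈ R.powerset, |sgnSum R (M i) T| :=
    Finset.sum_le_sum (fun i _ => khintchine (M i) R)
  rw [← Finset.mul_sum] at hk
  push_cast at hsum
  have h2 : (0:ℝ) < 2 ^ R.card := by positivity
  exact le_of_mul_le_mul_left (hk.trans hsum) h2

lemma zeros_bound {ι : Type} (w : ι → ι → ℝ) (L R : Finset ι) (δ : ℝ) (hδ : 0 ≤ δ) (m : ℕ)
    (hR : R.card = m)
    (h : ∀ A ⊆ L, ∀ B ⊆ R, |∑ i ∈ A, ∑ j ∈ B, (w i j - 1)| ≤ δ) :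
    (((L ×ˢ R).filter (fun p => w p.1 p.2 = 0)).card : ℝ) ≤ 64 / 9 * δ * Real.sqrt m := by
  have hb := rows_bound (fun i j => w i j - 1) L R δ h
  have hc : (((L ×ˢ R).filter (fun p => w p.1 p.2 = 0)).card : ℝ)
      = ∑ i ∈ L, ((R.filter (fun j => w i j = 0)).card : ℝ) := by
    simp only [Finset.card_filter]
    rw [Finset.sum_product]
    push_cast; rfl
  have hrow : ∀ i ∈ L, ((R.filter (fun j => w i j = 0)).card : ℝ)
      ≤ Real.sqrt m * Real.sqrt (∑ j ∈ R, (w i j - 1) ^ 2) := by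
    intro i _
    set z : ℝ := ((R.filter (fun j => w i j = 0)).card : ℝ) with hz
    have hz0 : 0 ≤ z := Nat.cast_nonneg _
    have h1 : z ≤ m := by
      rw [hz, ← hR]; exact_mod_cast Finset.card_filter_le _ _
    have h2 : z ≤ ∑ j ∈ R, (w i j - 1) ^ 2 := by
      rw [hz, Finset.card_filter]; push_cast
      apply Finset.sum_le_sum
      intro j _
      split_ifs with h0
      · rw [h0]; norm_num
      · positivity
    calc z = Real.sqrt z * Real.sqrt z := (Real.mul_self_sqrt hz0).symm
      _ ≤ _ := by gcongr
  rw [hc]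
  calc _ ≤ ∑ i ∈ L, Real.sqrt m * Real.sqrt (∑ j ∈ R, (w i j - 1) ^ 2) :=
        Finset.sum_le_sum hrow
    _ = Real.sqrt m * (16 / 9) * ∑ i ∈ L, 9 / 16 * Real.sqrt (∑ j ∈ R, (w i j - 1) ^ 2) := by
        rw [Finset.mul_sum]
        apply Finset.sum_congr rfl
        intro i _; ring
    _ ≤ Real.sqrt m * (16 / 9) * (4 * δ) := by gcongr
    _ = _ := by ring

lemma cutW_ind {n : ℕ} (w : Fin n → Fin n → ℝ) (S : Finset (Fin n)) :
    cutW w S = ∑ u, ∑ v, (if u ∈ S ∧ v ∉ S then w u v else 0) := by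
  unfold cutW
  rw [Finset.sum_filter, ← Finset.univ_product_univ, Finset.sum_product]

lemma rect_ind {n : ℕ} (w : Fin n → Fin n → ℝ) (A B : Finset (Fin n)) :
    ∑ i ∈ A, ∑ j ∈ B, w i j = ∑ u, ∑ v, (if u ∈ A ∧ v ∈ B then w u v else 0) := by
  rw [← Finset.sum_product' (f := w),
    ← Finset.sum_product' (f := fun u v => if u ∈ A ∧ v ∈ B then w u v else 0),
    ← Finset.sum_filter]
  refine Finset.sum_congr ?_ (fun _ _ => rfl)
  ext p; simp

lemma cut_identity {n : ℕ} (w : Fin n → Fin n → ℝ) (hw : ∀ u v, w u v = w v u)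
    (A B : Finset (Fin n)) (hAB : Disjoint A B) :
    cutW w A + cutW w B - cutW w (A ∪ B) = 2 * ∑ i ∈ A, ∑ j ∈ B, w i j := by
  have hs : ∑ i ∈ A, ∑ j ∈ B, w i j = ∑ i ∈ B, ∑ j ∈ A, w i j := by
    rw [Finset.sum_comm]
    exact Finset.sum_congr rfl (fun i _ => Finset.sum_congr rfl (fun j _ => hw _ _))
  rw [two_mul]
  nth_rewrite 2 [hs]
  rw [rect_ind w A B, rect_ind w B A, cutW_ind, cutW_ind, cutW_ind]
  simp only [← Finset.sum_add_distrib, ← Finset.sum_sub_distrib]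
  refine Finset.sum_congr rfl (fun u _ => ?_)
  refine Finset.sum_congr rfl (fun v _ => ?_)
  have hu : u ∈ A → u ∉ B := fun h1 h2 => Finset.disjoint_left.mp hAB h1 h2
  have hv : v ∈ A → v ∉ B := fun h1 h2 => Finset.disjoint_left.mp hAB h1 h2
  by_cases h1 : u ∈ A <;> by_cases h2 : u ∈ B <;> by_cases h3 : v ∈ A <;> by_cases h4 : v ∈ B <;>
    simp_all

noncomputable def adjW {n : ℕ} (G : SimpleGraph (Fin n)) : Fin n → Fin n → ℝ :=
  fun u v => if G.Adj u v then 1 else 0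

lemma cutSize_eq {n : ℕ} (G : SimpleGraph (Fin n)) (S : Finset (Fin n)) :
    (cutSize G S : ℝ) = cutW (adjW G) S := by
  unfold cutSize cutW adjW
  rw [Finset.sum_ite]
  simp [Finset.filter_filter, and_assoc]

lemma block_pos {n : ℕ} (G : SimpleGraph (Fin n)) (w : Fin n → Fin n → ℝ) (ε : ℝ)
    (hε : 0 < ε) (hε1 : ε < 1)
    (hsym : ∀ u v, w u v = w v u) (hnn : ∀ u v, 0 ≤ w u v)
    (hcut : ∀ S : Finset (Fin n),
              (cutSize G S : ℝ) / (1 + ε) ≤ cutW w S ∧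
                cutW w S ≤ (1 + ε) * (cutSize G S : ℝ))
    (L R : Finset (Fin n)) (hLR : Disjoint L R) (m : ℕ)
    (hL : L.card = m) (hR : R.card = m)
    (hadj : ∀ u ∈ L, ∀ v ∈ R, G.Adj u v)
    (hsz : ∀ S ⊆ L ∪ R, cutSize G S ≤ 4 * m ^ 2)
    (hfull : cutSize G (L ∪ R) = 0)
    (hm : m = 1 ∨ ε * Real.sqrt m ≤ 1 / 100) :
    (m : ℝ) ^ 2 / 2 ≤ (((L ×ˢ R).filter (fun p => 0 < w p.1 p.2)).card : ℝ) := by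
  rcases hm with rfl | hm
  · obtain ⟨a, rfl⟩ := Finset.card_eq_one.mp hL
    obtain ⟨b, rfl⟩ := Finset.card_eq_one.mp hR
    have hab : G.Adj a b := hadj a (by simp) b (by simp)
    have hid := cut_identity w hsym {a} {b} hLR
    have h3 := (hcut ({a} ∪ {b})).2
    rw [hfull] at h3
    have h1 := (hcut {a}).1
    have h2 := (hcut {b}).1
    have p1 : 0 < cutSize G {a} := by
      unfold cutSize
      apply Finset.card_pos.mpr
      exact ⟨(a, b), by simp [hab, hab.ne']⟩
    have p2 : 0 < (cutSize G {a} : ℝ) / (1 + ε) := by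
      have : (0:ℝ) < cutSize G {a} := by exact_mod_cast p1
      positivity
    have p3 : 0 ≤ (cutSize G {b} : ℝ) / (1 + ε) := by positivity
    simp only [Finset.sum_singleton, Nat.cast_zero, mul_zero] at hid h3
    have hw : 0 < w a b := by linarith
    simp only [Finset.singleton_product_singleton]
    rw [Finset.filter_true_of_mem (by simpa using hw)]
    norm_num
  · have hz := zeros_bound w L R (6 * ε * m ^ 2) (by positivity) m hR (by
      intro A hA B hB
      have hd : Disjoint A B := Finset.disjoint_of_subset_left hA
        (Finset.disjoint_of_subset_right hB hLR)
      have i1 := cut_identity w hsym A B hd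
      have i2 := cut_identity (adjW G) (fun u v => by simp [adjW, G.adj_comm]) A B hd
      have e : ∑ i ∈ A, ∑ j ∈ B, (w i j - 1)
          = ∑ i ∈ A, ∑ j ∈ B, w i j - ∑ i ∈ A, ∑ j ∈ B, adjW G i j := by
        rw [← Finset.sum_sub_distrib]
        refine Finset.sum_congr rfl (fun i hi => ?_)
        rw [← Finset.sum_sub_distrib]
        refine Finset.sum_congr rfl (fun j hj => ?_)
        simp [adjW, hadj i (hA hi) j (hB hj)]
      have err : ∀ S ⊆ L ∪ R, |cutW w S - cutW (adjW G) S| ≤ 4 * ε * m ^ 2 := by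
        intro S hS
        have h1 := hcut S
        have h2 : (cutSize G S : ℝ) ≤ 4 * m ^ 2 := by exact_mod_cast hsz S hS
        have h0 : (0:ℝ) ≤ cutSize G S := Nat.cast_nonneg _
        rw [← cutSize_eq]
        have h3 : (1 - ε) * (cutSize G S : ℝ) ≤ (cutSize G S : ℝ) / (1 + ε) := by
          rw [le_div_iff₀ (by linarith)]
          nlinarith [mul_nonneg h0 (sq_nonneg ε)]
        have h4 : ε * (cutSize G S : ℝ) ≤ ε * (4 * m ^ 2) := by gcongr
        rw [abs_le]
        constructor <;> linarith [h1.1, h1.2]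
      have b1 := abs_le.mp (err A (hA.trans Finset.subset_union_left))
      have b2 := abs_le.mp (err B (hB.trans Finset.subset_union_right))
      have b3 := abs_le.mp (err (A ∪ B) (Finset.union_subset_union hA hB))
      rw [e, abs_le]
      constructor <;> linarith [b1.1, b1.2, b2.1, b2.2, b3.1, b3.2])
    have hz2 : (((L ×ˢ R).filter (fun p => w p.1 p.2 = 0)).card : ℝ) ≤ (m:ℝ) ^ 2 / 2 := by
      refine hz.trans ?_
      have : (m:ℝ)^2 * (ε * Real.sqrt m) ≤ (m:ℝ)^2 * (1 / 100) := by gcongr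
      nlinarith [sq_nonneg (m:ℝ)]
    have htot := Finset.card_filter_add_card_filter_not (s := L ×ˢ R)
      (fun p => 0 < w p.1 p.2)
    have heq : (L ×ˢ R).filter (fun p => ¬ 0 < w p.1 p.2)
        = (L ×ˢ R).filter (fun p => w p.1 p.2 = 0) := by
      apply Finset.filter_congr
      intro p _
      constructor
      · intro h; exact le_antisymm (not_lt.mp h) (hnn _ _)
      · intro h; rw [h]; exact lt_irrefl _
    rw [heq, Finset.card_product, hL, hR] at htot
    have htot' : (((L ×ˢ R).filter (fun p => 0 < w p.1 p.2)).card : ℝ)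
      + (((L ×ˢ R).filter (fun p => w p.1 p.2 = 0)).card : ℝ) = (m:ℝ) * m := by
      exact_mod_cast htot
    nlinarith

/-- interval in `Fin n` -/
def ivl (n a m : ℕ) : Finset (Fin n) :=
  Finset.univ.filter (fun u : Fin n => a ≤ u.val ∧ u.val < a + m)

lemma mem_ivl {n a m : ℕ} {u : Fin n} : u ∈ ivl n a m ↔ a ≤ u.val ∧ u.val < a + m := by
  simp [ivl]

lemma card_ivl {n a m : ℕ} (h : a + m ≤ n) : (ivl n a m).card = m := by
  have : (ivl n a m).map Fin.valEmbedding = Finset.Ico a (a + m) := by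
    ext x
    simp only [Finset.mem_map, mem_ivl, Fin.valEmbedding_apply, Finset.mem_Ico]
    constructor
    · rintro ⟨u, hu, rfl⟩; exact hu
    · intro hx; exact ⟨⟨x, by omega⟩, hx, rfl⟩
  rw [← Finset.card_map Fin.valEmbedding, this]; simp

def cliqueG (n k : ℕ) : SimpleGraph (Fin n) where
  Adj u v := u ≠ v ∧ u.val / k = v.val / k
  symm := ⟨fun _ _ h => ⟨h.1.symm, h.2.symm⟩⟩
  loopless := ⟨fun _ h => h.1 rfl⟩

lemma mem_ivl_div {n k b : ℕ} (hk : 0 < k) {u : Fin n} :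
    u ∈ ivl n (b * k) k ↔ u.val / k = b := by
  rw [mem_ivl, Nat.div_eq_iff hk]
  omega

lemma edges_bound {n : ℕ} (m : ℕ) (hm0 : 1 ≤ m) (w : Fin n → Fin n → ℝ) (ε : ℝ)
    (hε : 0 < ε) (hε1 : ε < 1)
    (hsym : ∀ u v, w u v = w v u) (hnn : ∀ u v, 0 ≤ w u v)
    (hcut : ∀ S : Finset (Fin n),
              (cutSize (cliqueG n (2 * m)) S : ℝ) / (1 + ε) ≤ cutW w S ∧
                cutW w S ≤ (1 + ε) * (cutSize (cliqueG n (2 * m)) S : ℝ))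
    (hm : m = 1 ∨ ε * Real.sqrt m ≤ 1 / 100) :
    ((n / (2 * m) : ℕ) : ℝ) * ((m : ℝ) ^ 2 / 2) ≤
       ((Finset.univ.filter
                (fun p : Fin n × Fin n => p.1 < p.2 ∧ 0 < w p.1 p.2)).card : ℝ) := by
  set k := 2 * m with hk
  have hk0 : 0 < k := by omega
  set E := Finset.univ.filter (fun p : Fin n × Fin n => p.1 < p.2 ∧ 0 < w p.1 p.2) with hE
  have hfib : ∑ b ∈ Finset.range (n / k), (E.filter (fun p => p.1.val / k = b)).card ≤ E.card := by
    rw [← Finset.card_biUnion]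
    · apply Finset.card_le_card
      intro p hp
      obtain ⟨b, _, h⟩ := Finset.mem_biUnion.mp hp
      exact (Finset.mem_filter.mp h).1
    · intro b _ b' _ hbb
      refine Finset.disjoint_left.mpr ?_
      intro p h1 h2
      exact hbb ((Finset.mem_filter.mp h1).2.symm.trans (Finset.mem_filter.mp h2).2)
  have hblk : ∀ b ∈ Finset.range (n / k),
      (m : ℝ) ^ 2 / 2 ≤ ((E.filter (fun p => p.1.val / k = b)).card : ℝ) := by
    intro b hb
    have hb := Finset.mem_range.mp hb
    have hbn : b * k + k ≤ n := by
      have : (b + 1) * k ≤ n := (Nat.le_div_iff_mul_le hk0).mp hb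
      linarith
    have hun : ivl n (b * k) m ∪ ivl n (b * k + m) m = ivl n (b * k) k := by
      ext u; simp only [Finset.mem_union, mem_ivl]; omega
    have hLR : ∀ u ∈ ivl n (b * k) m, u.val / k = b := by
      intro u hu
      rw [← mem_ivl_div hk0, ← hun]; exact Finset.mem_union_left _ hu
    have hRR : ∀ u ∈ ivl n (b * k + m) m, u.val / k = b := by
      intro u hu
      rw [← mem_ivl_div hk0, ← hun]; exact Finset.mem_union_right _ hu
    have hlt : ∀ u ∈ ivl n (b * k) m, ∀ v ∈ ivl n (b * k + m) m, u < v := by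
      intro u hu v hv
      rw [mem_ivl] at hu hv
      exact Fin.lt_def.mpr (by omega)
    refine (block_pos (cliqueG n k) w ε hε hε1 hsym hnn hcut (ivl n (b * k) m)
      (ivl n (b * k + m) m) ?_ m (card_ivl (by omega)) (card_ivl (by omega)) ?_ ?_ ?_ hm).trans ?_
    · rw [Finset.disjoint_left]
      intro u h1 h2
      exact lt_irrefl _ (hlt u h1 u h2)
    · intro u hu v hv
      exact ⟨(hlt u hu v hv).ne, by rw [hLR u hu, hRR v hv]⟩
    · intro S hS
      rw [hun] at hS
      have : cutSize (cliqueG n k) S ≤ (ivl n (b * k) k ×ˢ ivl n (b * k) k).card := by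
        apply Finset.card_le_card
        intro p hp
        obtain ⟨h1, h2, h3⟩ := (Finset.mem_filter.mp hp).2
        have h4 := hS h1
        refine Finset.mem_product.mpr ⟨h4, ?_⟩
        rw [mem_ivl_div hk0] at h4 ⊢
        rw [← h3.2, h4]
      rw [Finset.card_product, card_ivl hbn] at this
      refine this.trans (le_of_eq ?_)
      rw [hk]; ring
    · rw [hun]
      apply Finset.card_eq_zero.mpr
      apply Finset.filter_eq_empty_iff.mpr
      rintro p - ⟨h1, h2, h3⟩
      rw [mem_ivl_div hk0] at h1 h2
      exact h2 (by rw [← h3.2, h1])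
    · have : ((ivl n (b * k) m ×ˢ ivl n (b * k + m) m).filter (fun p => 0 < w p.1 p.2))
          ⊆ E.filter (fun p => p.1.val / k = b) := by
        intro p hp
        obtain ⟨h1, h2⟩ := Finset.mem_filter.mp hp
        obtain ⟨h3, h4⟩ := Finset.mem_product.mp h1
        simp only [hE, Finset.mem_filter, Finset.mem_univ, true_and]
        exact ⟨⟨hlt _ h3 _ h4, h2⟩, hLR _ h3⟩
      exact_mod_cast Finset.card_le_card this
  have hs := Finset.sum_le_sum hblk
  rw [Finset.sum_const, Finset.card_range, nsmul_eq_mul] at hs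
  refine hs.trans ?_
  exact_mod_cast hfib

theorem stmt_1 :
    ∃ c : ℝ, 0 < c ∧
      ∀ (n : ℕ), 2 ≤ n → ∀ ε : ℝ, 1 / Real.sqrt n < ε → ε < 1 →
      ∃ G : SimpleGraph (Fin n),
        ∀ w : Fin n → Fin n → ℝ,
          (∀ u v, w u v = w v u) → (∀ u v, 0 ≤ w u v) → (∀ u, w u u = 0) →
          (∀ S : Finset (Fin n),
              (cutSize G S : ℝ) / (1 + ε) ≤ cutW w S ∧
                cutW w S ≤ (1 + ε) * (cutSize G S : ℝ)) →
          c * n / ε ^ 2 ≤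
            ((Finset.univ.filter
                (fun p : Fin n × Fin n => p.1 < p.2 ∧ 0 < w p.1 p.2)).card : ℝ) := by
  refine ⟨1 / 160000, by norm_num, ?_⟩
  intro n hn ε hε hε1
  have hn0 : (0:ℝ) < n := by exact_mod_cast (by omega : 0 < n)
  have hsn : 0 < Real.sqrt n := Real.sqrt_pos.mpr hn0
  have hε0 : 0 < ε := lt_trans (by positivity) hε
  have hε2 : 0 < ε ^ 2 := by positivity
  have hnε : 1 / ε ^ 2 < n := by
    rw [div_lt_iff₀ hsn] at hε
    rw [div_lt_iff₀ hε2]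
    have h1 : 1 < (ε * Real.sqrt n) ^ 2 := by nlinarith
    rw [mul_pow, Real.sq_sqrt hn0.le] at h1
    linarith
  set x : ℝ := 1 / (10000 * ε ^ 2) with hx
  have hx0 : 0 < x := by positivity
  have hxe : 1 / ε ^ 2 = 10000 * x := by rw [hx]; field_simp
  set m := max 1 ⌊x⌋₊ with hmdef
  have hm1 : 1 ≤ m := le_max_left _ _
  have hmx : x ≤ 2 * m := by
    have h1 := Nat.lt_floor_add_one x
    have h2 : (⌊x⌋₊ : ℝ) ≤ m := by exact_mod_cast le_max_right 1 ⌊x⌋₊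
    have h3 : (1:ℝ) ≤ m := by exact_mod_cast hm1
    linarith
  have hmc : m = 1 ∨ (m:ℝ) ≤ x := by
    rcases le_total ⌊x⌋₊ 1 with h | h
    · left; exact max_eq_left h
    · right; rw [hmdef, max_eq_right h]; exact Nat.floor_le hx0.le
  have h2m : 2 * m ≤ n := by
    rcases hmc with h | h
    · omega
    · have : (2 * m : ℝ) ≤ n := by linarith
      exact_mod_cast this
  refine ⟨cliqueG n (2 * m), ?_⟩
  intro w hsym hnn _ hcut
  have hb := edges_bound m hm1 w ε hε0 hε1 hsym hnn hcut (hmc.imp id (by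
    intro h
    have h1 : Real.sqrt m ≤ Real.sqrt x := Real.sqrt_le_sqrt h
    have h2 : Real.sqrt x = 1 / (100 * ε) := by
      rw [hx, show 1 / (10000 * ε ^ 2) = (1 / (100 * ε)) ^ 2 by field_simp; norm_num]
      exact Real.sqrt_sq (by positivity)
    rw [h2] at h1
    calc ε * Real.sqrt m ≤ ε * (1 / (100 * ε)) := by gcongr
      _ = 1 / 100 := by field_simp))
  refine le_trans ?_ hb
  have hN : (n:ℝ) ≤ 4 * m * ((n / (2 * m) : ℕ) : ℝ) := by
    have h1 : 1 ≤ n / (2 * m) := (Nat.le_div_iff_mul_le (by omega)).mpr (by omega)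
    have h2 := Nat.div_add_mod n (2 * m)
    have h3 := Nat.mod_lt n (show 0 < 2 * m by omega)
    have h4 : n ≤ 4 * m * (n / (2 * m)) := by nlinarith
    exact_mod_cast h4
  have hm0 : (0:ℝ) < m := by exact_mod_cast hm1
  calc 1 / 160000 * (n:ℝ) / ε ^ 2 = 1 / 160000 * n * (1 / ε ^ 2) := by ring
    _ = 1 / 16 * n * x := by rw [hxe]; ring
    _ ≤ 1 / 16 * n * (2 * m) := by gcongr
    _ ≤ 1 / 16 * (4 * m * ((n / (2 * m) : ℕ) : ℝ)) * (2 * m) := by gcongr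
    _ = _ := by ring
end

section
/- Let c = 10⁻³ and let ε ∈ (0, c/10] be such that k := 1/ε², k/2, and c/ε are positive integers, and let n be a positive even integer. Consider the distribution ν on inputs (s₁,...,s_{n/2}, i, t), where each s_j ∈ {0,1}^k and t ∈ {0,1}^k have Hamming weight exactly k/2 and i ∈ {1,...,n/2}, defined as follows: i is uniform; with probability 1/2 the pair (s_i, t) is uniform among pairs of weight-k/2 strings with Hamming distance Δ(s_i,t) ≥ k/2 + c/ε and with probability 1/2 it is uniform among pairs with Δ(s_i,t) ≤ k/2 − c/ε; and the strings s_j for j ≠ i are independent and uniform among weight-k/2 strings. Suppose there is a one-way protocol with a finite shared-randomness space (R, ρ): Alice computes a message M = A(s₁,...,s_{n/2}, r) ∈ {0,1}^m and Bob outputs B(M, i, t, r) ∈ {0,1}, such that with probability at least 2/3 (over ν and ρ) Bob's output equals the indicator of the event Δ(s_i, t) ≥ k/2 + c/ε. Then m ≥ c'·n/ε² for an absolute constant c' > 0. -/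
open scoped Classical

/-- Hamming weight of a bit string. -/
noncomputable def hamWt {k : ℕ} (a : Fin k → Bool) : ℕ :=
  (Finset.univ.filter (fun j => a j = true)).card

/-- Hamming distance between two bit strings. -/
noncomputable def hamDist {k : ℕ} (a b : Fin k → Bool) : ℕ :=
  (Finset.univ.filter (fun j => a j ≠ b j)).card

/-- Pairs of weight-`khalf` strings at Hamming distance at least `khalf + d`. -/
noncomputable def farPairs (k khalf d : ℕ) : Finset ((Fin k → Bool) × (Fin k → Bool)) :=
  Finset.univ.filter (fun p => hamWt p.1 = khalf ∧ hamWt p.2 = khalf ∧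
    khalf + d ≤ hamDist p.1 p.2)

/-- Pairs of weight-`khalf` strings at Hamming distance at most `khalf - d`. -/
noncomputable def closePairs (k khalf d : ℕ) : Finset ((Fin k → Bool) × (Fin k → Bool)) :=
  Finset.univ.filter (fun p => hamWt p.1 = khalf ∧ hamWt p.2 = khalf ∧
    hamDist p.1 p.2 + d ≤ khalf)

/-- Strings of Hamming weight exactly `khalf`. -/
noncomputable def wtStrings (k khalf : ℕ) : Finset (Fin k → Bool) :=
  Finset.univ.filter (fun a => hamWt a = khalf)

/-- The input distribution ν: the index `i` is uniform in `Fin N`; the pair `(s i, t)` is,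
with probability 1/2, uniform among far pairs and, with probability 1/2, uniform among
close pairs; the remaining strings `s j` (`j ≠ i`) are independent and uniform among
weight-`khalf` strings. -/
noncomputable def nuDist (k khalf d N : ℕ)
    (s : Fin N → Fin k → Bool) (i : Fin N) (t : Fin k → Bool) : ℝ :=
  (1 / (N : ℝ)) *
    ((1 / 2) * (if (s i, t) ∈ farPairs k khalf d then (1 : ℝ) else 0) /
        ((farPairs k khalf d).card : ℝ) +
      (1 / 2) * (if (s i, t) ∈ closePairs k khalf d then (1 : ℝ) else 0) /
        ((closePairs k khalf d).card : ℝ)) *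
    ∏ j ∈ Finset.univ.filter (fun j => j ≠ i),
      (if hamWt (s j) = khalf then (1 : ℝ) / ((wtStrings k khalf).card : ℝ) else 0)

/-! ### Signs and inner products -/

/-- The sign of a bit. -/
noncomputable def sg (b : Bool) : ℝ := if b = true then 1 else -1

/-- The inner product of two bit strings, in the plus/minus one convention. -/
noncomputable def ip {k : ℕ} (s t : Fin k → Bool) : ℝ := ∑ j, sg (s j) * sg (t j)

/-- The support of a bit string. -/
noncomputable def supp {k : ℕ} (s : Fin k → Bool) : Finset (Fin k) :=
  Finset.univ.filter (fun j => s j = true)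

/-- Sign function with a gap. -/
noncomputable def gg {k : ℕ} (d : ℕ) (s t : Fin k → Bool) : ℝ :=
  if ip s t ≤ -(2 * (d : ℝ)) then 1 else if 2 * (d : ℝ) ≤ ip s t then -1 else 0

lemma sg_not (b : Bool) : sg (!b) = - sg b := by cases b <;> simp [sg]

lemma sg_sq (b : Bool) : sg b * sg b = 1 := by cases b <;> simp [sg]

lemma abs_sg (b : Bool) : |sg b| = 1 := by cases b <;> simp [sg]

lemma ip_comm {k : ℕ} (s t : Fin k → Bool) : ip s t = ip t s := by
  unfold ip; exact Finset.sum_congr rfl (fun j _ => mul_comm _ _)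

lemma ip_not {k : ℕ} (s t : Fin k → Bool) : ip (fun j => !s j) t = - ip s t := by
  unfold ip; simp [sg_not]

lemma ip_not_right {k : ℕ} (s t : Fin k → Bool) : ip s (fun j => !t j) = - ip s t := by
  unfold ip; simp [sg_not]

lemma ip_perm {k : ℕ} (s t : Fin k → Bool) (π : Equiv.Perm (Fin k)) :
    ip (s ∘ π) (t ∘ π) = ip s t := by
  unfold ip; exact Equiv.sum_comp π (fun j => sg (s j) * sg (t j))

lemma ip_eq_hamDist {k : ℕ} (s t : Fin k → Bool) : ip s t = k - 2 * (hamDist s t : ℝ) := by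
  have h : ∀ j, sg (s j) * sg (t j) = 1 - 2 * (if s j ≠ t j then (1 : ℝ) else 0) := by
    intro j
    cases s j <;> cases t j <;> simp [sg] <;> norm_num
  unfold ip hamDist
  simp_rw [h]
  rw [Finset.sum_sub_distrib, ← Finset.mul_sum, Finset.sum_boole]
  simp

lemma mem_wt {k kh : ℕ} (s : Fin k → Bool) : s ∈ wtStrings k kh ↔ (supp s).card = kh := by
  unfold wtStrings hamWt supp
  rw [Finset.mem_filter]
  simp only [Finset.mem_univ, true_and]

lemma sum_sg {k : ℕ} (s : Fin k → Bool) : ∑ j, sg (s j) = 2 * ((supp s).card : ℝ) - k := by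
  have h : ∀ j, sg (s j) = 2 * (if s j = true then (1 : ℝ) else 0) - 1 := by
    intro j
    cases s j <;> simp [sg]; norm_num
  simp_rw [h]
  rw [Finset.sum_sub_distrib, ← Finset.mul_sum, Finset.sum_boole]
  simp [supp]

lemma ip_eq_inter {k : ℕ} (s t : Fin k → Bool) :
    ip s t = k - 2 * ((supp s).card : ℝ) - 2 * ((supp t).card : ℝ)
      + 4 * ((supp s ∩ supp t).card : ℝ) := by
  have h : ∀ j, sg (s j) * sg (t j) = 1 - 2 * (if s j = true then (1 : ℝ) else 0)
      - 2 * (if t j = true then (1 : ℝ) else 0)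
      + 4 * (if s j = true ∧ t j = true then (1 : ℝ) else 0) := by
    intro j
    cases s j <;> cases t j <;> simp [sg] <;> norm_num
  unfold ip
  simp_rw [h]
  rw [Finset.sum_add_distrib, Finset.sum_sub_distrib, Finset.sum_sub_distrib, ← Finset.mul_sum,
    ← Finset.mul_sum, ← Finset.mul_sum, Finset.sum_boole, Finset.sum_boole, Finset.sum_boole]
  simp [supp, Finset.filter_and]

lemma wt_perm {k kh : ℕ} (s : Fin k → Bool) (π : Equiv.Perm (Fin k)) :
    s ∘ π ∈ wtStrings k kh ↔ s ∈ wtStrings k kh := by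
  have h1 := sum_sg s
  have h2 := sum_sg (s ∘ π)
  have h3 : ∑ j, sg ((s ∘ π) j) = ∑ j, sg (s j) := Equiv.sum_comp π (fun j => sg (s j))
  rw [mem_wt, mem_wt]
  have : ((supp (s ∘ π)).card : ℝ) = (supp s).card := by linarith
  rw [Nat.cast_inj.mp this]

lemma wt_not {k kh : ℕ} (hk : k = 2 * kh) (s : Fin k → Bool) :
    (fun j => !s j) ∈ wtStrings k kh ↔ s ∈ wtStrings k kh := by
  have h1 := sum_sg s
  have h2 := sum_sg (fun j => !s j)
  simp only [sg_not, Finset.sum_neg_distrib] at h2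
  rw [mem_wt, mem_wt]
  have hk' : (k : ℝ) = 2 * kh := by exact_mod_cast hk
  constructor
  · intro h
    rw [h] at h2
    have : ((supp s).card : ℝ) = kh := by linarith
    exact_mod_cast this
  · intro h
    rw [h] at h1
    have : ((supp (fun j => !s j)).card : ℝ) = kh := by linarith
    exact_mod_cast this

lemma gg_abs_le {k d : ℕ} (s t : Fin k → Bool) : |gg d s t| ≤ 1 := by
  unfold gg; split_ifs <;> simp

lemma gg_comm {k d : ℕ} (s t : Fin k → Bool) : gg d s t = gg d t s := by
  unfold gg; rw [ip_comm]

lemma gg_perm {k d : ℕ} (s t : Fin k → Bool) (π : Equiv.Perm (Fin k)) :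
    gg d (s ∘ π) (t ∘ π) = gg d s t := by
  unfold gg; rw [ip_perm]

lemma gg_not {k d : ℕ} (hd : 0 < d) (s t : Fin k → Bool) :
    gg d (fun j => !s j) t = - gg d s t := by
  have : (0 : ℝ) < d := by exact_mod_cast hd
  unfold gg; rw [ip_not]
  split_ifs <;> first | (norm_num; done) | (exfalso; linarith)

/-! ### Central binomial estimates -/

lemma cb_upper (n : ℕ) : ((Nat.centralBinom n : ℝ)) ^ 2 * (3 * n + 1) ≤ 16 ^ n := by
  induction n with
  | zero => simp
  | succ n ih =>
    have h : ((n : ℝ) + 1) * Nat.centralBinom (n + 1) = 2 * (2 * n + 1) * Nat.centralBinom n := by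
      exact_mod_cast Nat.succ_mul_centralBinom_succ n
    have hn : (0 : ℝ) ≤ n := Nat.cast_nonneg n
    have h2 : ((n : ℝ) + 1) ^ 2 * (Nat.centralBinom (n + 1) : ℝ) ^ 2
        = 4 * (2 * n + 1) ^ 2 * (Nat.centralBinom n : ℝ) ^ 2 := by
      rw [← mul_pow, h]; ring
    have h3 : ((n : ℝ) + 1) ^ 2 * (3 * n + 1) *
        ((Nat.centralBinom (n + 1) : ℝ) ^ 2 * (3 * ((n : ℝ) + 1) + 1))
        ≤ ((n : ℝ) + 1) ^ 2 * (3 * n + 1) * 16 ^ (n + 1) := by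
      calc _ = (4 * (2 * n + 1) ^ 2 * (3 * n + 4)) *
              ((Nat.centralBinom n : ℝ) ^ 2 * (3 * n + 1)) := by
                linear_combination (3 * (n : ℝ) + 1) * (3 * n + 4) * h2
        _ ≤ (4 * (2 * n + 1) ^ 2 * (3 * n + 4)) * 16 ^ n := by gcongr
        _ ≤ (16 * (((n : ℝ) + 1) ^ 2 * (3 * n + 1))) * 16 ^ n := by
            refine mul_le_mul_of_nonneg_right ?_ (by positivity)
            nlinarith
        _ = _ := by ring
    push_cast
    exact le_of_mul_le_mul_left h3 (by positivity)

lemma cb_lower (n : ℕ) (hn : 0 < n) : (16 : ℝ) ^ n ≤ ((Nat.centralBinom n : ℝ)) ^ 2 * (4 * n) := by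
  induction n, hn using Nat.le_induction with
  | base => simp [Nat.centralBinom]; norm_num
  | succ n hn' ih =>
    have h : ((n : ℝ) + 1) * Nat.centralBinom (n + 1) = 2 * (2 * n + 1) * Nat.centralBinom n := by
      exact_mod_cast Nat.succ_mul_centralBinom_succ n
    have hn : (0 : ℝ) < n := by exact_mod_cast hn'
    have h2 : ((n : ℝ) + 1) ^ 2 * (Nat.centralBinom (n + 1) : ℝ) ^ 2
        = 4 * (2 * n + 1) ^ 2 * (Nat.centralBinom n : ℝ) ^ 2 := by
      rw [← mul_pow, h]; ring
    have h3 : ((n : ℝ) + 1) * n * 16 ^ (n + 1) ≤ ((n : ℝ) + 1) * n *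
        ((Nat.centralBinom (n + 1) : ℝ) ^ 2 * (4 * ((n : ℝ) + 1))) := by
      calc ((n : ℝ) + 1) * n * 16 ^ (n + 1) = 16 * (((n : ℝ) + 1) * n) * 16 ^ n := by ring
        _ ≤ (4 * (2 * n + 1) ^ 2) * 16 ^ n := by
            refine mul_le_mul_of_nonneg_right ?_ (by positivity)
            nlinarith
        _ ≤ (4 * (2 * n + 1) ^ 2) * ((Nat.centralBinom n : ℝ) ^ 2 * (4 * n)) := by gcongr
        _ = _ := by linear_combination (-(4 * (n : ℝ))) * h2
    push_cast
    exact le_of_mul_le_mul_left h3 (by positivity)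

lemma card_wt {k kh : ℕ} (hk : k = 2 * kh) : (wtStrings k kh).card = Nat.centralBinom kh := by
  have : (wtStrings k kh).card = (Finset.powersetCard kh (Finset.univ : Finset (Fin k))).card := by
    refine Finset.card_bij' (fun s _ => supp s) (fun A _ => fun j => decide (j ∈ A)) ?_ ?_ ?_ ?_
    · intro s hs
      rw [Finset.mem_powersetCard]
      exact ⟨Finset.subset_univ _, (mem_wt s).1 hs⟩
    · intro A hA
      rw [Finset.mem_powersetCard] at hA
      rw [mem_wt]
      rw [← hA.2]; congr 1; ext j; simp [supp]
    · intro s hs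
      funext j; simp [supp]
    · intro A hA
      ext j; simp [supp]
  rw [this, Finset.card_powersetCard, Finset.card_univ, Fintype.card_fin, hk, Nat.centralBinom]

lemma mass_bound {k q : ℕ} (hk : k = 4 * q) (s : Fin k → Bool) (hs : s ∈ wtStrings k (2 * q))
    (j : ℕ) :
    ((wtStrings k (2 * q)).filter (fun t => (supp s ∩ supp t).card = j)).card
      ≤ (Nat.centralBinom q) ^ 2 := by
  rw [mem_wt] at hs
  have h1 : ((wtStrings k (2 * q)).filter (fun t => (supp s ∩ supp t).card = j)).card ≤
      ((Finset.powersetCard j (supp s)) ×ˢ (Finset.powersetCard (2 * q - j) (supp s)ᶜ)).card := by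
    refine Finset.card_le_card_of_injOn (fun t => (supp s ∩ supp t, (supp s)ᶜ ∩ supp t)) ?_ ?_
    · intro t ht
      simp only [Finset.coe_filter, Set.mem_ofPred_eq] at ht
      obtain ⟨ht1, ht2⟩ := ht
      rw [mem_wt] at ht1
      simp only [Finset.coe_product, Set.mem_prod, Finset.mem_coe, Finset.mem_powersetCard]
      refine ⟨⟨Finset.inter_subset_left, ht2⟩, Finset.inter_subset_left, ?_⟩
      have := Finset.card_inter_add_card_sdiff (supp t) (supp s)
      rw [Finset.inter_comm, ht2, ht1] at this
      have h3 : (supp s)ᶜ ∩ supp t = supp t \ supp s := by ext x; simp [and_comm]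
      rw [h3]; omega
    · intro t _ t' _ h
      simp only [Prod.mk.injEq] at h
      have h4 : supp t = supp t' := by
        ext x
        have a1 := Finset.ext_iff.1 h.1 x
        have a2 := Finset.ext_iff.1 h.2 x
        simp only [Finset.mem_inter, Finset.mem_compl] at a1 a2
        tauto
      funext x
      have := Finset.ext_iff.1 h4 x
      simp only [supp, Finset.mem_filter, Finset.mem_univ, true_and] at this
      exact Bool.eq_iff_iff.2 this
  refine h1.trans ?_
  rw [Finset.card_product, Finset.card_powersetCard, Finset.card_powersetCard, Finset.card_compl,
    hs, Fintype.card_fin, hk, sq]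
  have e : 4 * q - 2 * q = 2 * q := by omega
  rw [e]
  exact Nat.mul_le_mul (Nat.choose_le_centralBinom _ _) (Nat.choose_le_centralBinom _ _)

/-- Anticoncentration. -/
lemma anti {k q d : ℕ} (hd : 0 < d) (hq : q = 250000 * d ^ 2) (hk : k = 4 * q)
    (s : Fin k → Bool) (hs : s ∈ wtStrings k (2 * q)) :
    (((wtStrings k (2 * q)).filter (fun t => |ip s t| < 4 * (d : ℝ))).card : ℝ)
      ≤ (1 / 250) * ((wtStrings k (2 * q)).card : ℝ) := by
  have hd' : (0 : ℝ) < d := by exact_mod_cast hd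
  have hqR : (q : ℝ) = 250000 * (d : ℝ) ^ 2 := by exact_mod_cast hq
  have hkR : (k : ℝ) = 4 * q := by exact_mod_cast hk
  have h1 : ((wtStrings k (2 * q)).filter (fun t => |ip s t| < 4 * (d : ℝ))).card
      ≤ (Finset.Ico (q - d) (q + d)).card * (Nat.centralBinom q) ^ 2 := by
    have hsub : (wtStrings k (2 * q)).filter (fun t => |ip s t| < 4 * (d : ℝ)) ⊆
        (Finset.Ico (q - d) (q + d)).biUnion (fun j =>
          (wtStrings k (2 * q)).filter (fun t => (supp s ∩ supp t).card = j)) := by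
      intro t ht
      rw [Finset.mem_filter] at ht
      rw [Finset.mem_biUnion]
      refine ⟨(supp s ∩ supp t).card, ?_, Finset.mem_filter.2 ⟨ht.1, rfl⟩⟩
      have h2 := ip_eq_inter s t
      rw [(mem_wt s).1 hs, (mem_wt t).1 ht.1] at h2
      push_cast at h2
      have h3 := abs_lt.1 ht.2
      rw [h2, hkR] at h3
      rw [Finset.mem_Ico]
      constructor
      · have : (q : ℝ) < ((supp s ∩ supp t).card : ℝ) + d := by linarith [h3.1]
        have : q < (supp s ∩ supp t).card + d := by exact_mod_cast this
        omega
      · have : ((supp s ∩ supp t).card : ℝ) < q + d := by linarith [h3.2]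
        exact_mod_cast this
    refine (Finset.card_le_card hsub).trans ?_
    exact Finset.card_biUnion_le_card_mul _ _ _ (fun j _ => mass_bound hk s hs j)
  have h2 : (Finset.Ico (q - d) (q + d)).card ≤ 2 * d := by rw [Nat.card_Ico]; omega
  have h3 : (((wtStrings k (2 * q)).filter (fun t => |ip s t| < 4 * (d : ℝ))).card : ℝ)
      ≤ 2 * d * (Nat.centralBinom q : ℝ) ^ 2 := by
    exact_mod_cast h1.trans (Nat.mul_le_mul_right _ h2)
  rw [card_wt (by omega)]
  have hq0 : 0 < q := by rw [hq]; positivity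
  have u := cb_upper q
  have l := cb_lower (2 * q) (by omega)
  set X : ℝ := (Nat.centralBinom q : ℝ) ^ 2
  set Y : ℝ := (Nat.centralBinom (2 * q) : ℝ)
  have hY : 0 ≤ Y := Nat.cast_nonneg _
  push_cast at l
  have e : (16 : ℝ) ^ (2 * q) = (16 ^ q) ^ 2 := by rw [mul_comm, pow_mul]
  have hZ : (0 : ℝ) ≤ 16 ^ q := by positivity
  -- 16^q ≤ 1416 d Y
  have l2 : (16 : ℝ) ^ q ≤ 1416 * d * Y := by
    apply le_of_sq_le_sq _ (by positivity)
    rw [← e]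
    refine l.trans ?_
    rw [hqR]
    nlinarith [mul_nonneg (sq_nonneg Y) (sq_nonneg (d : ℝ))]
  have hX : 0 ≤ X := by positivity
  have u2 : X * (750000 * (d : ℝ) ^ 2) ≤ 1416 * d * Y := by
    refine le_trans ?_ (u.trans l2)
    rw [hqR]
    nlinarith
  have u3 : X * (750000 * (d : ℝ)) ≤ 1416 * Y := by
    apply le_of_mul_le_mul_left _ hd'
    nlinarith
  nlinarith

lemma sum_wt_perm {k kh : ℕ} (π : Equiv.Perm (Fin k)) (f : (Fin k → Bool) → ℝ) :
    ∑ t ∈ wtStrings k kh, f (t ∘ π) = ∑ t ∈ wtStrings k kh, f t := by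
  refine Finset.sum_nbij' (fun t => t ∘ π) (fun t => t ∘ π.symm) ?_ ?_ ?_ ?_ ?_
  · intro t ht; exact (wt_perm t π).2 ht
  · intro t ht; exact (wt_perm t π.symm).2 ht
  · intro t _; funext j; simp
  · intro t _; funext j; simp
  · intro t _; rfl

lemma sum_wt_not {k kh : ℕ} (hk : k = 2 * kh) (f : (Fin k → Bool) → ℝ) :
    ∑ t ∈ wtStrings k kh, f (fun j => !t j) = ∑ t ∈ wtStrings k kh, f t := by
  refine Finset.sum_nbij' (fun t j => !t j) (fun t j => !t j) ?_ ?_ ?_ ?_ ?_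
  · intro t ht; exact (wt_not hk t).2 ht
  · intro t ht; exact (wt_not hk t).2 ht
  · intro t _; funext j; simp
  · intro t _; funext j; simp
  · intro t _; rfl

/-- Second moment bound for a balanced linear form over the slice. -/
lemma second_moment {k kh : ℕ} (w : Fin k → ℝ) (hw : ∑ j, w j = 0) :
    ∑ t ∈ wtStrings k kh, (∑ j, w j * sg (t j)) ^ 2
      ≤ 2 * ((wtStrings k kh).card : ℝ) * ∑ j, w j ^ 2 := by
  set S := wtStrings k kh with hS
  set M : Fin k → Fin k → ℝ := fun i j => ∑ t ∈ S, sg (t i) * sg (t j) with hM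
  have hMle : ∀ i j, |M i j| ≤ S.card := by
    intro i j
    refine (Finset.abs_sum_le_sum_abs _ _).trans ?_
    simp [abs_mul, abs_sg]
  have hMd : ∀ i, M i i = S.card := by
    intro i; simp [hM, sg_sq]
  have hMc : ∀ i j j', j ≠ i → j' ≠ i → M i j = M i j' := by
    intro i j j' h h'
    have := sum_wt_perm (kh := kh) (Equiv.swap j j') (fun t => sg (t i) * sg (t j))
    simp only [Function.comp] at this
    rw [Equiv.swap_apply_of_ne_of_ne h.symm h'.symm, Equiv.swap_apply_left] at this
    exact this.symm
  have hm : ∀ i, ∃ m : ℝ, |m| ≤ S.card ∧ ∀ j, j ≠ i → M i j = m := by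
    intro i
    by_cases h : ∃ j, j ≠ i
    · obtain ⟨j0, h0⟩ := h
      exact ⟨M i j0, hMle i j0, fun j hj => hMc i j j0 hj h0⟩
    · push Not at h
      exact ⟨0, by simp, fun j hj => absurd (h j) hj⟩
  choose m hm1 hm2 using hm
  have hrow : ∀ i, ∑ j, w j * M i j = w i * (S.card - m i) := by
    intro i
    have : ∀ j, w j * M i j = m i * w j + (if j = i then w i * (S.card - m i) else 0) := by
      intro j
      by_cases h : j = i
      · subst h; rw [hMd]; simp; ring
      · rw [hm2 i j h]; simp [h]; ring
    simp_rw [this]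
    rw [Finset.sum_add_distrib, ← Finset.mul_sum, hw]
    simp
  have hexp : ∑ t ∈ S, (∑ j, w j * sg (t j)) ^ 2 = ∑ i, w i * ∑ j, w j * M i j := by
    have : ∀ t : Fin k → Bool, (∑ j, w j * sg (t j)) ^ 2
        = ∑ i, ∑ j, w i * (w j * (sg (t i) * sg (t j))) := by
      intro t
      rw [sq, Finset.sum_mul_sum]
      refine Finset.sum_congr rfl fun i _ => Finset.sum_congr rfl fun j _ => by ring
    simp_rw [this]
    rw [Finset.sum_comm]
    refine Finset.sum_congr rfl fun i _ => ?_
    rw [Finset.sum_comm, Finset.mul_sum]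
    refine Finset.sum_congr rfl fun j _ => ?_
    simp only [hM]
    rw [Finset.mul_sum, Finset.mul_sum]
  rw [hexp, Finset.mul_sum]
  refine Finset.sum_le_sum fun i _ => ?_
  rw [hrow]
  have := abs_le.1 (hm1 i)
  nlinarith [sq_nonneg (w i), this.1]

/-- Orthogonal balanced strings are exactly uncorrelated. -/
lemma orth {k q d : ℕ} (hd : 0 < d) (hk : k = 4 * q) (s t : Fin k → Bool)
    (hs : s ∈ wtStrings k (2 * q)) (ht : t ∈ wtStrings k (2 * q))
    (h : (supp s ∩ supp t).card = q) :
    ∑ x ∈ wtStrings k (2 * q), gg d s x * gg d t x = 0 := by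
  rw [mem_wt] at hs ht
  have c11 : (Finset.univ.filter (fun j => s j = true ∧ t j = true)).card = q := by
    rw [← h]; simp [supp, Finset.filter_and]
  have c1 := Finset.card_filter_add_card_filter_not (s := supp s) (fun j => t j = true)
  have c2 := Finset.card_filter_add_card_filter_not (s := supp t) (fun j => s j = true)
  have c3 := Finset.card_filter_add_card_filter_not (s := (Finset.univ : Finset (Fin k)))
    (fun j => s j = true)
  have c4 := Finset.card_filter_add_card_filter_not
    (s := (Finset.univ : Finset (Fin k)).filter (fun j => ¬ s j = true))
    (fun j => t j = true)
  have e1 : (Finset.univ.filter (fun j => s j = true)).card = 2 * q := hs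
  rw [hs] at c1
  rw [ht] at c2
  rw [e1, Finset.card_univ, Fintype.card_fin] at c3
  unfold supp at c1 c2
  rw [Finset.filter_filter, Finset.filter_filter] at c1 c2 c4
  have c21 : (Finset.univ.filter (fun j => t j = true ∧ s j = true)).card = q := by
    rw [← c11]; congr 1; ext j; simp [and_comm]
  have c10 : (Finset.univ.filter (fun j => s j = true ∧ ¬ t j = true)).card = q := by omega
  have c01' : (Finset.univ.filter (fun j => t j = true ∧ ¬ s j = true)).card = q := by omega
  have c01 : (Finset.univ.filter (fun j => ¬ s j = true ∧ t j = true)).card = q := by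
    rw [← c01']; congr 1; ext j; simp [and_comm]
  have c00 : (Finset.univ.filter (fun j => ¬ s j = true ∧ ¬ t j = true)).card = q := by omega
  have hcard : ∀ c : Bool × Bool,
      Fintype.card {j // (s j, t j) = c} = Fintype.card {j // (s j, !t j) = c} := by
    rintro ⟨a, b⟩
    rw [Fintype.card_subtype, Fintype.card_subtype]
    have f1 : (Finset.univ.filter (fun j => (s j, t j) = (a, b))).card = q := by
      simp only [Bool.not_eq_true] at c11 c10 c01 c00
      cases a <;> cases b <;> simp only [Prod.mk.injEq, Bool.not_eq_true', Bool.not_eq_false'] <;>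
        assumption
    have f2 : (Finset.univ.filter (fun j => (s j, !t j) = (a, b))).card = q := by
      simp only [Bool.not_eq_true] at c11 c10 c01 c00
      cases a <;> cases b <;> simp only [Prod.mk.injEq, Bool.not_eq_true', Bool.not_eq_false'] <;>
        assumption
    rw [f1, f2]
  let π : Equiv.Perm (Fin k) := Equiv.ofFiberEquiv (f := fun j => (s j, t j))
    (g := fun j => (s j, !t j)) (fun c => Fintype.equivOfCardEq (hcard c))
  have hπ : ∀ j, (s (π j), !t (π j)) = (s j, t j) := fun j => Equiv.ofFiberEquiv_map
    (f := fun j => (s j, t j)) (g := fun j => (s j, !t j))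
    (fun c => Fintype.equivOfCardEq (hcard c)) j
  have p1 : s ∘ π = s := by funext j; exact (Prod.ext_iff.1 (hπ j)).1
  have p2 : (fun j => !t j) ∘ π = t := by funext j; exact (Prod.ext_iff.1 (hπ j)).2
  have key : ∀ x : Fin k → Bool,
      gg d s (x ∘ π) * gg d t (x ∘ π) = - (gg d s x * gg d t x) := by
    intro x
    have a1 : gg d s (x ∘ π) = gg d s x := by
      conv_lhs => rw [← p1]
      exact gg_perm s x π
    have a2 : gg d t (x ∘ π) = - gg d t x := by
      conv_lhs => rw [← p2]
      rw [gg_perm, gg_not hd]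
    rw [a1, a2]; ring
  have := sum_wt_perm (kh := 2 * q) π (fun x => gg d s x * gg d t x)
  simp only [key, Finset.sum_neg_distrib] at this
  linarith

/-- Every balanced string is close to one that is orthogonal to `s`. -/
lemma exists_orth {k q : ℕ} (hk : k = 4 * q) (s t : Fin k → Bool)
    (hs : s ∈ wtStrings k (2 * q)) (ht : t ∈ wtStrings k (2 * q)) :
    ∃ t' ∈ wtStrings k (2 * q), (supp s ∩ supp t').card = q ∧
      ∑ j, (sg (t j) - sg (t' j)) ^ 2 ≤ 2 * |ip s t| := by
  have hkR : (k : ℝ) = 4 * q := by exact_mod_cast hk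
  have hip := ip_eq_inter s t
  rw [mem_wt] at hs ht
  rw [hs, ht, hkR] at hip
  push_cast at hip
  have d1 := Finset.card_inter_add_card_sdiff (supp t) (supp s)
  rw [Finset.inter_comm, ht] at d1
  have hsc : ((supp s)ᶜ).card = 2 * q := by
    rw [Finset.card_compl, hs, Fintype.card_fin]; omega
  have hsd : supp t \ supp s ⊆ (supp s)ᶜ := by intro x; simp
  -- choose the two halves
  have key : ∃ A D : Finset (Fin k), A ⊆ supp s ∧ D ⊆ (supp s)ᶜ ∧ A.card = q ∧ D.card = q ∧
      (4 * (((supp t ∩ (A ∪ D)).card : ℝ)) ≥ 8 * q - |ip s t|) := by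
    rcases le_total q (supp s ∩ supp t).card with h | h
    · obtain ⟨A, hA, hAc⟩ := Finset.exists_subset_card_eq h
      obtain ⟨D, hD1, hD2, hDc⟩ := Finset.exists_subsuperset_card_eq hsd
        (show (supp t \ supp s).card ≤ q by omega) (show q ≤ _ by omega)
      refine ⟨A, D, hA.trans Finset.inter_subset_left, hD2, hAc, hDc, ?_⟩
      have : A ∪ (supp t \ supp s) ⊆ supp t ∩ (A ∪ D) := by
        intro x hx
        rw [Finset.mem_union] at hx
        rw [Finset.mem_inter, Finset.mem_union]
        rcases hx with hx | hx
        · exact ⟨(Finset.mem_inter.1 (hA hx)).2, Or.inl hx⟩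
        · exact ⟨(Finset.mem_sdiff.1 hx).1, Or.inr (hD1 hx)⟩
      have h2 := Finset.card_le_card this
      rw [Finset.card_union_of_disjoint] at h2
      · have h3 : 3 * q ≤ (supp t ∩ (A ∪ D)).card + (supp s ∩ supp t).card := by omega
        have h3R : 3 * (q : ℝ) ≤ ((supp t ∩ (A ∪ D)).card : ℝ) + ((supp s ∩ supp t).card : ℝ) := by
          exact_mod_cast h3
        have := le_abs_self (ip s t)
        linarith
      · rw [Finset.disjoint_left]
        intro x hx hx'
        exact (Finset.mem_sdiff.1 hx').2 (Finset.mem_inter.1 (hA hx)).1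
    · obtain ⟨A, hA1, hA2, hAc⟩ := Finset.exists_subsuperset_card_eq
        (Finset.inter_subset_left (s₁ := supp s) (s₂ := supp t)) h (show q ≤ _ by omega)
      obtain ⟨D, hD, hDc⟩ := Finset.exists_subset_card_eq
        (show q ≤ (supp t \ supp s).card by omega)
      refine ⟨A, D, hA2, hD.trans hsd, hAc, hDc, ?_⟩
      have : (supp s ∩ supp t) ∪ D ⊆ supp t ∩ (A ∪ D) := by
        intro x hx
        rw [Finset.mem_union] at hx
        rw [Finset.mem_inter, Finset.mem_union]
        rcases hx with hx | hx
        · exact ⟨(Finset.mem_inter.1 hx).2, Or.inl (hA1 hx)⟩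
        · exact ⟨(Finset.mem_sdiff.1 (hD hx)).1, Or.inr hx⟩
      have h2 := Finset.card_le_card this
      rw [Finset.card_union_of_disjoint] at h2
      · have h3R : ((supp s ∩ supp t).card : ℝ) + q ≤ ((supp t ∩ (A ∪ D)).card : ℝ) := by
          rw [hDc] at h2
          exact_mod_cast h2
        have := neg_abs_le (ip s t)
        linarith
      · rw [Finset.disjoint_left]
        intro x hx hx'
        exact (Finset.mem_sdiff.1 (hD hx')).2 (Finset.mem_inter.1 hx).1
  obtain ⟨A, D, hA, hD, hAc, hDc, hlow⟩ := key
  have hAD : Disjoint A D := by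
    rw [Finset.disjoint_left]
    intro x hx hx'
    exact (Finset.mem_compl.1 (hD hx')) (hA hx)
  have hsup : supp (fun j => decide (j ∈ A ∪ D)) = A ∪ D := by ext j; simp [supp]
  have hc : (supp (fun j => decide (j ∈ A ∪ D))).card = 2 * q := by
    rw [hsup, Finset.card_union_of_disjoint hAD]; omega
  refine ⟨fun j => decide (j ∈ A ∪ D), (mem_wt _).2 hc, ?_, ?_⟩
  · rw [hsup]
    have : supp s ∩ (A ∪ D) = A := by
      ext x
      simp only [Finset.mem_inter, Finset.mem_union]
      constructor
      · rintro ⟨h1, h2 | h2⟩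
        · exact h2
        · exact absurd h1 (Finset.mem_compl.1 (hD h2))
      · intro h; exact ⟨hA h, Or.inl h⟩
    rw [this, hAc]
  · have h1 := ip_eq_inter t (fun j => decide (j ∈ A ∪ D))
    rw [hc, hsup, ht, hkR] at h1
    push_cast at h1
    have h2 : ∀ j, (sg (t j) - sg (decide (j ∈ A ∪ D))) ^ 2
        = 2 - 2 * (sg (t j) * sg (decide (j ∈ A ∪ D))) := by
      intro j
      have e1 := sg_sq (t j)
      have e2 := sg_sq (decide (j ∈ A ∪ D))
      linear_combination e1 + e2
    simp_rw [h2]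
    rw [Finset.sum_sub_distrib, ← Finset.mul_sum]
    have h3 : ∑ j, sg (t j) * sg (decide (j ∈ A ∪ D)) = ip t (fun j => decide (j ∈ A ∪ D)) := rfl
    rw [h3, h1]
    simp
    rw [hkR]
    linarith

/-- Near-orthogonal strings are nearly uncorrelated. -/
lemma corr {k q d : ℕ} (hd : 0 < d) (hq : q = 250000 * d ^ 2) (hk : k = 4 * q)
    (s t : Fin k → Bool) (hs : s ∈ wtStrings k (2 * q)) (ht : t ∈ wtStrings k (2 * q))
    (h : |ip s t| ≤ (1 / 10 ^ 9) * (k : ℝ)) :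
    ∑ x ∈ wtStrings k (2 * q), gg d s x * gg d t x
      ≤ (1 / 100) * ((wtStrings k (2 * q)).card : ℝ) := by
  have hd' : (0 : ℝ) < d := by exact_mod_cast hd
  have hkR : (k : ℝ) = 1000000 * (d : ℝ) ^ 2 := by
    have : k = 1000000 * d ^ 2 := by omega
    exact_mod_cast this
  obtain ⟨t', ht', hort, hclose⟩ := exists_orth hk s t hs ht
  set S := wtStrings k (2 * q) with hS
  set w : Fin k → ℝ := fun j => sg (t j) - sg (t' j) with hw
  have hw0 : ∑ j, w j = 0 := by
    simp only [hw]
    rw [Finset.sum_sub_distrib, sum_sg, sum_sg, (mem_wt t).1 ht, (mem_wt t').1 ht', sub_self]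
  have h2m := second_moment (kh := 2 * q) w hw0
  have hwsum : ∀ x : Fin k → Bool, ∑ j, w j * sg (x j) = ip t x - ip t' x := by
    intro x
    simp only [hw, ip]
    rw [← Finset.sum_sub_distrib]
    exact Finset.sum_congr rfl fun j _ => by ring
  simp_rw [hwsum] at h2m
  rw [← hS] at h2m
  have h0 := orth hd hk s t' hs ht' hort
  have hpt : ∀ x ∈ S, gg d s x * gg d t x - gg d s x * gg d t' x ≤
      2 * (if |ip t x| < 4 * (d : ℝ) then (1 : ℝ) else 0) +
      (1 / (2 * (d : ℝ) ^ 2)) * (ip t x - ip t' x) ^ 2 := by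
    intro x _
    have hsq : 0 ≤ (1 / (2 * (d : ℝ) ^ 2)) * (ip t x - ip t' x) ^ 2 := by positivity
    have hb : gg d s x * gg d t x - gg d s x * gg d t' x ≤ |gg d t x - gg d t' x| := by
      rw [← mul_sub]
      refine (le_abs_self _).trans ?_
      rw [abs_mul]
      exact mul_le_of_le_one_left (abs_nonneg _) (gg_abs_le s x)
    have h2 : |gg d t x - gg d t' x| ≤ 2 := by
      have a1 := abs_le.1 (gg_abs_le (d := d) t x)
      have a2 := abs_le.1 (gg_abs_le (d := d) t' x)
      rw [abs_le]; constructor <;> linarith [a1.1, a1.2, a2.1, a2.2]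
    split_ifs with hc
    · linarith
    · rcases le_or_gt ((2 * (d : ℝ)) ^ 2) ((ip t x - ip t' x) ^ 2) with hf | hf
      · have : (1 / (2 * (d : ℝ) ^ 2)) * (2 * (d : ℝ)) ^ 2 = 2 := by field_simp
        have h3 : (1 / (2 * (d : ℝ) ^ 2)) * (2 * (d : ℝ)) ^ 2 ≤
            (1 / (2 * (d : ℝ) ^ 2)) * (ip t x - ip t' x) ^ 2 := by gcongr
        linarith
      · have hlt := abs_lt.1 (abs_lt_of_sq_lt_sq hf (by positivity))
        have hz : gg d t x = gg d t' x := by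
          rw [not_lt, le_abs] at hc
          unfold gg
          rcases hc with hc | hc
          · rw [if_neg (by linarith), if_pos (by linarith), if_neg (by linarith [hlt.2]),
              if_pos (by linarith [hlt.2])]
          · rw [if_pos (by linarith), if_pos (by linarith [hlt.1])]
        rw [hz, sub_self]
        linarith
  have hsum := Finset.sum_le_sum hpt
  rw [Finset.sum_sub_distrib, h0, Finset.sum_add_distrib, ← Finset.mul_sum, ← Finset.mul_sum,
    Finset.sum_boole] at hsum
  have ha := anti hd hq hk t ht
  rw [← hS] at ha
  have hcl : ∑ j, w j ^ 2 ≤ 2 * ((1 / 10 ^ 9) * (1000000 * (d : ℝ) ^ 2)) := by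
    rw [hkR] at h
    linarith
  have hSn : (0 : ℝ) ≤ S.card := Nat.cast_nonneg _
  have h5 : (1 / (2 * (d : ℝ) ^ 2)) * ∑ x ∈ S, (ip t x - ip t' x) ^ 2 ≤
      (1 / (2 * (d : ℝ) ^ 2)) * (2 * S.card * (2 * ((1 / 10 ^ 9) * (1000000 * (d : ℝ) ^ 2)))) := by
    gcongr
    exact h2m.trans (by gcongr)
  have h6 : (1 / (2 * (d : ℝ) ^ 2)) * (2 * S.card * (2 * ((1 / 10 ^ 9) * (1000000 * (d : ℝ) ^ 2))))
      = (2 / 1000) * (S.card : ℝ) := by field_simp; ring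
  linarith

/-- Tail bound over the cube. -/
lemma tail {k : ℕ} (s : Fin k → Bool) (β : ℝ) (hβ : 0 ≤ β) (S : Finset (Fin k → Bool)) :
    ((S.filter (fun x => ¬ |ip s x| ≤ β * k)).card : ℝ)
      ≤ 2 * 2 ^ k * Real.exp (-(β ^ 2 / 2 * k)) := by
  have mgf : ∀ θ : ℝ, ∑ x : Fin k → Bool, Real.exp (θ * ip s x) ≤
      2 ^ k * Real.exp (θ ^ 2 / 2 * k) := by
    intro θ
    have h1 : ∀ x : Fin k → Bool, Real.exp (θ * ip s x)
        = ∏ j, Real.exp (θ * (sg (s j) * sg (x j))) := by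
      intro x; rw [← Real.exp_sum, ip, Finset.mul_sum]
    simp_rw [h1]
    rw [← Fintype.prod_sum (f := fun j b => Real.exp (θ * (sg (s j) * sg b)))]
    have h2 : ∀ j, ∑ b : Bool, Real.exp (θ * (sg (s j) * sg b)) = 2 * Real.cosh θ := by
      intro j
      rw [Fintype.sum_bool, Real.cosh_eq]
      cases s j <;> simp [sg] <;> ring
    simp_rw [h2]
    rw [Finset.prod_const, Finset.card_univ, Fintype.card_fin, mul_pow]
    gcongr
    calc Real.cosh θ ^ k ≤ (Real.exp (θ ^ 2 / 2)) ^ k := by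
          exact pow_le_pow_left₀ (Real.cosh_pos _).le (Real.cosh_le_exp_half_sq θ) k
      _ = _ := by rw [← Real.exp_nat_mul]; congr 1; ring
  have h1 : ((S.filter (fun x => ¬ |ip s x| ≤ β * k)).card : ℝ) ≤
      ∑ x : Fin k → Bool, Real.exp (-(β ^ 2 * k)) *
        (Real.exp (β * ip s x) + Real.exp ((-β) * ip s x)) := by
    rw [Finset.card_eq_sum_ones, Nat.cast_sum]
    refine (Finset.sum_le_sum ?_).trans (Finset.sum_le_sum_of_subset_of_nonneg
      (Finset.subset_univ _) (fun _ _ _ => by positivity))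
    intro x hx
    have hx := (Finset.mem_filter.1 hx).2
    rw [mul_add, ← Real.exp_add, ← Real.exp_add]
    rw [not_le, lt_abs] at hx
    push_cast
    rcases hx with hx | hx
    · have : 1 ≤ Real.exp (-(β ^ 2 * k) + β * ip s x) := by
        apply Real.one_le_exp
        nlinarith
      linarith [Real.exp_pos (-(β ^ 2 * k) + (-β) * ip s x)]
    · have : 1 ≤ Real.exp (-(β ^ 2 * k) + (-β) * ip s x) := by
        apply Real.one_le_exp
        nlinarith
      linarith [Real.exp_pos (-(β ^ 2 * k) + β * ip s x)]
  refine h1.trans ?_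
  rw [← Finset.mul_sum, Finset.sum_add_distrib]
  have m1 := mgf β
  have m2 := mgf (-β)
  rw [neg_sq] at m2
  calc _ ≤ Real.exp (-(β ^ 2 * k)) * (2 ^ k * Real.exp (β ^ 2 / 2 * k) +
        2 ^ k * Real.exp (β ^ 2 / 2 * k)) := by gcongr
    _ = 2 * 2 ^ k * (Real.exp (-(β ^ 2 * k)) * Real.exp (β ^ 2 / 2 * k)) := by ring
    _ = _ := by rw [← Real.exp_add]; congr 2; ring

/-- The number of `t` on which Bob's answer `b` is right for the string `x`. -/
noncomputable def psi {k : ℕ} (d : ℕ) (S : Finset (Fin k → Bool)) (b : (Fin k → Bool) → Bool)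
    (x : Fin k → Bool) : ℝ :=
  ∑ t ∈ S, (|gg d x t| + sg (b t) * gg d x t) / 2

lemma psi_nonneg {k d : ℕ} (S : Finset (Fin k → Bool)) (b : (Fin k → Bool) → Bool)
    (x : Fin k → Bool) : 0 ≤ psi d S b x := by
  refine Finset.sum_nonneg fun t _ => ?_
  have : |sg (b t) * gg d x t| = |gg d x t| := by rw [abs_mul, abs_sg, one_mul]
  have h2 := neg_abs_le (sg (b t) * gg d x t)
  linarith

lemma psi_le {k d : ℕ} (S : Finset (Fin k → Bool)) (b : (Fin k → Bool) → Bool)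
    (x : Fin k → Bool) :
    psi d S b x ≤ (S.card : ℝ) / 2 + (∑ t ∈ S, sg (b t) * gg d x t) / 2 := by
  have h : ∀ t ∈ S, (|gg d x t| + sg (b t) * gg d x t) / 2
      ≤ 1 / 2 + (sg (b t) * gg d x t) / 2 := by
    intro t _
    have := gg_abs_le (d := d) x t
    linarith
  refine (Finset.sum_le_sum h).trans ?_
  rw [Finset.sum_add_distrib, Finset.sum_const, nsmul_eq_mul, Finset.sum_div]
  linarith

lemma psi_le_card {k d : ℕ} (S : Finset (Fin k → Bool)) (b : (Fin k → Bool) → Bool)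
    (x : Fin k → Bool) : psi d S b x ≤ S.card := by
  have h : ∀ t ∈ S, (|gg d x t| + sg (b t) * gg d x t) / 2 ≤ 1 := by
    intro t _
    have := gg_abs_le (d := d) x t
    have h1 : |sg (b t) * gg d x t| = |gg d x t| := by rw [abs_mul, abs_sg, one_mul]
    have h2 := le_abs_self (sg (b t) * gg d x t)
    linarith
  refine (Finset.sum_le_sum h).trans ?_
  simp

lemma sum_gg_zero {k kh d : ℕ} (hd : 0 < d) (hk : k = 2 * kh) (t : Fin k → Bool) :
    ∑ x ∈ wtStrings k kh, gg d x t = 0 := by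
  have := sum_wt_not hk (fun x => gg d x t)
  simp only [gg_not hd, Finset.sum_neg_distrib] at this
  linarith

lemma sum_psi_le {k kh d : ℕ} (hd : 0 < d) (hk : k = 2 * kh) (b : (Fin k → Bool) → Bool) :
    ∑ x ∈ wtStrings k kh, psi d (wtStrings k kh) b x ≤ ((wtStrings k kh).card : ℝ) ^ 2 / 2 := by
  refine (Finset.sum_le_sum fun x _ => psi_le _ b x).trans ?_
  rw [Finset.sum_add_distrib, ← Finset.sum_div, ← Finset.sum_div,
    Finset.sum_comm (f := fun x t => sg (b t) * gg d x t)]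
  simp_rw [← Finset.mul_sum, sum_gg_zero hd hk]
  simp
  apply le_of_eq
  ring

lemma G_bound {k q d : ℕ} (hd : 0 < d) (hq : q = 250000 * d ^ 2) (hk : k = 4 * q)
    (b : (Fin k → Bool) → Bool) :
    (3 / 100) * (((wtStrings k (2 * q)).filter (fun x =>
      (6 / 10) * ((wtStrings k (2 * q)).card : ℝ) < psi d (wtStrings k (2 * q)) b x)).card : ℝ)
      ≤ 2 * 2 ^ k * Real.exp (-((1 / 10 ^ 9) ^ 2 / 2 * k)) := by
  set S := wtStrings k (2 * q) with hS
  set G := S.filter (fun x => (6 / 10) * (S.card : ℝ) < psi d S b x) with hG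
  set T : ℝ := 2 * 2 ^ k * Real.exp (-((1 / 10 ^ 9) ^ 2 / 2 * k)) with hT
  have hT0 : 0 ≤ T := by positivity
  rcases Finset.eq_empty_or_nonempty G with h0 | hne
  · rw [h0]; simpa using hT0
  have hGS : G ⊆ S := Finset.filter_subset _ _
  have hGpos : (0 : ℝ) < G.card := by exact_mod_cast hne.card_pos
  have hSpos : (0 : ℝ) < S.card := by exact_mod_cast (hne.mono hGS).card_pos
  -- first moment
  have h1 : (2 / 10) * (S.card : ℝ) * G.card ≤ ∑ t ∈ S, sg (b t) * ∑ x ∈ G, gg d x t := by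
    have : ∀ x ∈ G, (2 / 10) * (S.card : ℝ) ≤ ∑ t ∈ S, sg (b t) * gg d x t := by
      intro x hx
      have a1 := (Finset.mem_filter.1 hx).2
      have a2 := psi_le (d := d) S b x
      linarith
    have h2 := Finset.sum_le_sum this
    rw [Finset.sum_const, nsmul_eq_mul, Finset.sum_comm] at h2
    simp_rw [← Finset.mul_sum] at h2
    linarith
  -- Cauchy-Schwarz
  have h2 : (∑ t ∈ S, sg (b t) * ∑ x ∈ G, gg d x t) ^ 2 ≤
      S.card * ∑ t ∈ S, (∑ x ∈ G, gg d x t) ^ 2 := by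
    refine (Finset.sum_mul_sq_le_sq_mul_sq S (fun t => sg (b t)) _).trans ?_
    apply le_of_eq
    congr 1
    simp [sq, sg_sq]
  have h3 : ∑ t ∈ S, (∑ x ∈ G, gg d x t) ^ 2
      = ∑ x ∈ G, ∑ y ∈ G, ∑ t ∈ S, gg d x t * gg d y t := by
    simp_rw [sq, Finset.sum_mul_sum]
    rw [Finset.sum_comm]
    refine Finset.sum_congr rfl fun x _ => ?_
    rw [Finset.sum_comm]
  have h4 : ∀ x ∈ G, ∑ y ∈ G, ∑ t ∈ S, gg d x t * gg d y t
      ≤ G.card * ((1 / 100) * S.card) + T * S.card := by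
    intro x hx
    have hp : ∀ y ∈ G, ∑ t ∈ S, gg d x t * gg d y t ≤ (1 / 100) * (S.card : ℝ)
        + (if ¬ |ip x y| ≤ (1 / 10 ^ 9) * (k : ℝ) then (1 : ℝ) else 0) * S.card := by
      intro y hy
      by_cases hc : |ip x y| ≤ (1 / 10 ^ 9) * (k : ℝ)
      · have := corr hd hq hk x y (hGS hx) (hGS hy) hc
        rw [if_neg (not_not.2 hc)]
        linarith
      · rw [if_pos hc]
        have : ∑ t ∈ S, gg d x t * gg d y t ≤ ∑ t ∈ S, (1 : ℝ) := by
          refine Finset.sum_le_sum fun t _ => ?_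
          refine (le_abs_self _).trans ?_
          rw [abs_mul]
          exact mul_le_one₀ (gg_abs_le _ _) (abs_nonneg _) (gg_abs_le _ _)
        simp at this
        linarith
    refine (Finset.sum_le_sum hp).trans ?_
    rw [Finset.sum_add_distrib, Finset.sum_const, nsmul_eq_mul, ← Finset.sum_mul, Finset.sum_boole]
    have := tail x (1 / 10 ^ 9) (by norm_num) G
    gcongr
  have h5 := Finset.sum_le_sum h4
  rw [Finset.sum_const, nsmul_eq_mul, ← h3] at h5
  have h6 : ((2 / 10) * (S.card : ℝ) * G.card) ^ 2 ≤
      S.card * (G.card * (G.card * ((1 / 100) * S.card) + T * S.card)) := by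
    refine le_trans ?_ (h2.trans ?_)
    · exact pow_le_pow_left₀ (by positivity) h1 2
    · gcongr
  have h7 : (S.card : ℝ) ^ 2 * G.card * ((4 / 100) * G.card) ≤
      (S.card : ℝ) ^ 2 * G.card * ((1 / 100) * G.card + T) := by
    calc _ = ((2 / 10) * (S.card : ℝ) * G.card) ^ 2 := by ring
      _ ≤ _ := h6
      _ = _ := by ring
  have h8 := le_of_mul_le_mul_left h7 (by positivity)
  linarith

lemma mgf_exists : ∃ c0 : ℝ, 0 < c0 ∧ ∀ (d q k : ℕ), 0 < d → q = 250000 * d ^ 2 → k = 4 * q →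
    ∃ l : ℝ, 0 < l ∧ c0 * k ≤ l ∧ ∀ b : (Fin k → Bool) → Bool,
      ∑ x ∈ wtStrings k (2 * q),
        Real.exp (l * (psi d (wtStrings k (2 * q)) b x / ((wtStrings k (2 * q)).card : ℝ)))
      ≤ ((wtStrings k (2 * q)).card : ℝ) * Real.exp ((62 / 100) * l) := by
  obtain ⟨a, ha⟩ : ∃ a : ℝ, a = (1 / 10 ^ 9) ^ 2 / 4 := ⟨_, rfl⟩
  have ha0 : 0 < a := by rw [ha]; norm_num
  obtain ⟨D, hD⟩ : ∃ D : ℝ, D = (100 / 3) * (1 / a) := ⟨_, rfl⟩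
  have hD0 : 0 < D := by rw [hD]; positivity
  obtain ⟨K, hK⟩ : ∃ K : ℝ, K = Real.log (1 + D) / ((2 / 100) * a) := ⟨_, rfl⟩
  have hK0 : 0 < K := by
    rw [hK]
    have := Real.log_pos (show 1 < 1 + D by linarith)
    positivity
  refine ⟨min a ((1 / 10) / K), lt_min ha0 (by positivity), ?_⟩
  intro d q k hd hq hk
  set S := wtStrings k (2 * q) with hS
  have hq0 : 0 < q := by rw [hq]; positivity
  have hk0 : (0 : ℝ) < k := by
    have : 0 < k := by omega
    exact_mod_cast this
  have hScard : S.card = Nat.centralBinom (2 * q) := card_wt (by omega)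
  have hSpos : (0 : ℝ) < S.card := by
    rw [hScard]; exact_mod_cast Nat.centralBinom_pos _
  have hu1 : ∀ b x, psi d S b x / (S.card : ℝ) ≤ 1 := by
    intro b x; rw [div_le_one hSpos]; exact psi_le_card S b x
  have hu0 : ∀ b x, 0 ≤ psi d S b x / (S.card : ℝ) := by
    intro b x; exact div_nonneg (psi_nonneg S b x) hSpos.le
  rcases le_total (k : ℝ) K with hkK | hkK
  · refine ⟨1 / 10, by norm_num, ?_, ?_⟩
    · calc min a ((1 / 10) / K) * k ≤ ((1 / 10) / K) * K := by
            gcongr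
            exact min_le_right _ _
        _ = 1 / 10 := by field_simp
    · intro b
      have hp : ∀ x ∈ S, Real.exp ((1 / 10) * (psi d S b x / (S.card : ℝ))) ≤
          1 + 1 / 100 + (1 / 10 / S.card) * psi d S b x := by
        intro x _
        have a1 := hu1 b x
        have a0 := hu0 b x
        set y := psi d S b x / (S.card : ℝ) with hy
        have e : (1 / 10 / S.card) * psi d S b x = (1 / 10) * y := by rw [hy]; ring
        rw [e]
        have := Real.abs_exp_sub_one_sub_id_le (x := (1 / 10) * y)
          (by rw [abs_of_nonneg (by positivity)]; linarith)
        have h2 := (abs_le.1 this).2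
        nlinarith
      refine (Finset.sum_le_sum hp).trans ?_
      rw [Finset.sum_add_distrib, Finset.sum_const, nsmul_eq_mul, ← Finset.mul_sum]
      have hs := sum_psi_le hd (show k = 2 * (2 * q) by omega) b
      rw [← hS] at hs
      have h1 : (1 / 10 / (S.card : ℝ)) * ∑ x ∈ S, psi d S b x ≤
          (1 / 10 / (S.card : ℝ)) * ((S.card : ℝ) ^ 2 / 2) := by gcongr
      have h2 : (1 / 10 / (S.card : ℝ)) * ((S.card : ℝ) ^ 2 / 2) = S.card * (1 / 20) := by
        field_simp; norm_num
      have h3 := Real.add_one_le_exp ((62 / 100) * (1 / 10 : ℝ))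
      have h4 : (S.card : ℝ) * ((62 / 100) * (1 / 10 : ℝ) + 1) ≤
        S.card * Real.exp ((62 / 100) * (1 / 10 : ℝ)) := by gcongr
      linarith
  · refine ⟨a * k, by positivity, ?_, ?_⟩
    · gcongr; exact min_le_left _ _
    · intro b
      set G := S.filter (fun x => (6 / 10) * (S.card : ℝ) < psi d S b x) with hG
      have hGb : (3 / 100) * (G.card : ℝ) ≤ 2 * 2 ^ k * Real.exp (-((1 / 10 ^ 9) ^ 2 / 2 * k)) :=
        G_bound hd hq hk b
      have hGD : (G.card : ℝ) ≤ D * Real.exp (-(a * k)) * S.card := by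
        have e1 : Real.exp (-((1 / 10 ^ 9) ^ 2 / 2 * k)) =
            Real.exp (-(a * k)) * Real.exp (-(a * k)) := by
          rw [← Real.exp_add, ha]; congr 1; ring
        have e2 : (2 : ℝ) * 2 ^ k ≤ k * S.card := by
          have := (Nat.four_pow_le_two_mul_self_mul_centralBinom (2 * q) (by omega))
          have e3 : 4 ^ (2 * q) = 2 ^ k := by
            rw [hk, show (4 : ℕ) = 2 ^ 2 by norm_num, ← pow_mul]; congr 1; ring
          have h4 : 4 ^ (2 * q) < (2 * q) * Nat.centralBinom (2 * q) :=
            Nat.four_pow_lt_mul_centralBinom (2 * q) (by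
              have : 1 ≤ d ^ 2 := Nat.one_le_pow _ _ hd
              omega)
          rw [e3] at h4
          rw [hScard]
          have h5 : 2 * 2 ^ k ≤ k * Nat.centralBinom (2 * q) := by
            rw [show k * Nat.centralBinom (2 * q) = 2 * (2 * q * Nat.centralBinom (2 * q)) by
              conv_lhs => rw [hk]
              ring]
            omega
          exact_mod_cast h5
        have e3 : a * k * Real.exp (-(a * k)) ≤ 1 := by
          have h1 := Real.add_one_le_exp (a * k)
          have h2 : a * k * Real.exp (-(a * k)) ≤ Real.exp (a * k) * Real.exp (-(a * k)) := by
            gcongr; linarith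
          rwa [← Real.exp_add, add_neg_cancel, Real.exp_zero] at h2
        have e4 : k * Real.exp (-(a * k)) ≤ 1 / a := by
          rw [le_div_iff₀ ha0]; linarith
        rw [e1] at hGb
        have h5 : (3 / 100) * (G.card : ℝ) ≤ (1 / a) * (Real.exp (-(a * k)) * S.card) := by
          calc _ ≤ _ := hGb
            _ ≤ (k * S.card) * (Real.exp (-(a * k)) * Real.exp (-(a * k))) := by gcongr
            _ = (k * Real.exp (-(a * k))) * (Real.exp (-(a * k)) * S.card) := by ring
            _ ≤ _ := by gcongr
        rw [hD]
        linarith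
      have hp : ∀ x ∈ S, Real.exp (a * k * (psi d S b x / (S.card : ℝ))) ≤
          Real.exp ((6 / 10) * (a * k)) +
            (if (6 / 10) * (S.card : ℝ) < psi d S b x then (1 : ℝ) else 0) * Real.exp (a * k) := by
        intro x _
        split_ifs with hc
        · have : Real.exp (a * k * (psi d S b x / (S.card : ℝ))) ≤ Real.exp (a * k) := by
            apply Real.exp_le_exp.2
            exact mul_le_of_le_one_right (by positivity) (hu1 b x)
          linarith [Real.exp_pos ((6 / 10) * (a * k))]
        · rw [zero_mul, add_zero]
          apply Real.exp_le_exp.2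
          have : psi d S b x / (S.card : ℝ) ≤ 6 / 10 := by
            rw [div_le_iff₀ hSpos]; linarith
          rw [mul_comm]
          gcongr
      refine (Finset.sum_le_sum hp).trans ?_
      rw [Finset.sum_add_distrib, Finset.sum_const, nsmul_eq_mul, ← Finset.sum_mul,
        Finset.sum_boole]
      have h1 : (G.card : ℝ) * Real.exp (a * k) ≤ D * S.card := by
        calc _ ≤ (D * Real.exp (-(a * k)) * S.card) * Real.exp (a * k) := by gcongr
          _ = D * S.card * (Real.exp (-(a * k)) * Real.exp (a * k)) := by ring
          _ = _ := by rw [← Real.exp_add, neg_add_cancel, Real.exp_zero, mul_one]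
      have h2 : 1 + D ≤ Real.exp ((2 / 100) * (a * k)) := by
        rw [← Real.log_le_iff_le_exp (by linarith)]
        rw [hK, div_le_iff₀ (by positivity)] at hkK
        linarith
      have h3 : 1 ≤ Real.exp ((6 / 10) * (a * k)) := Real.one_le_exp (by positivity)
      have h4 : Real.exp ((62 / 100) * (a * k)) =
          Real.exp ((6 / 10) * (a * k)) * Real.exp ((2 / 100) * (a * k)) := by
        rw [← Real.exp_add]; congr 1; ring
      have h5 : Real.exp ((6 / 10) * (a * k)) + D ≤ Real.exp ((62 / 100) * (a * k)) := by
        rw [h4]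
        nlinarith
      calc _ ≤ (S.card : ℝ) * Real.exp ((6 / 10) * (a * k)) + D * S.card := by gcongr
        _ = S.card * (Real.exp ((6 / 10) * (a * k)) + D) := by ring
        _ ≤ _ := by gcongr

/-- The union bound over messages, through exponential moments. -/
lemma union_bound {X : Type} {N m : ℕ} (S : Finset X) (hS : S.Nonempty)
    (u : (Fin m → Bool) → Fin N → X → ℝ) (A : (Fin N → X) → (Fin m → Bool)) (l a b : ℝ)
    (hl : 0 < l)
    (hmgf : ∀ M i, ∑ x ∈ S, Real.exp (l * u M i x) ≤ (S.card : ℝ) * Real.exp (a * l))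
    (havg : b * N * (S.card : ℝ) ^ N ≤
      ∑ s ∈ Fintype.piFinset (fun _ : Fin N => S), ∑ i, u (A s) i (s i)) :
    (b - a) * l * N ≤ m := by
  set Pi := Fintype.piFinset (fun _ : Fin N => S) with hPi
  have hSpos : (0 : ℝ) < S.card := by exact_mod_cast hS.card_pos
  have hPc : (Pi.card : ℝ) = (S.card : ℝ) ^ N := by simp [hPi]
  set Y : (Fin N → X) → ℝ := fun s => l * ∑ i, u (A s) i (s i) with hY
  have hup : ∑ s ∈ Pi, Real.exp (Y s) ≤ 2 ^ m * ((S.card : ℝ) * Real.exp (a * l)) ^ N := by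
    have h1 : ∀ s ∈ Pi, Real.exp (Y s) ≤ ∑ M : Fin m → Bool, ∏ i, Real.exp (l * u M i (s i)) := by
      intro s _
      have : Real.exp (Y s) = ∏ i, Real.exp (l * u (A s) i (s i)) := by
        rw [← Real.exp_sum, ← Finset.mul_sum]
      rw [this]
      exact Finset.single_le_sum (f := fun M => ∏ i, Real.exp (l * u M i (s i)))
        (fun M _ => Finset.prod_nonneg fun i _ => (Real.exp_pos _).le) (Finset.mem_univ (A s))
    refine (Finset.sum_le_sum h1).trans ?_
    rw [Finset.sum_comm]
    have h2 : ∀ M ∈ (Finset.univ : Finset (Fin m → Bool)),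
        ∑ s ∈ Pi, ∏ i, Real.exp (l * u M i (s i)) ≤ ((S.card : ℝ) * Real.exp (a * l)) ^ N := by
      intro M _
      rw [hPi, ← Finset.prod_univ_sum (fun _ => S) (fun i x => Real.exp (l * u M i x))]
      refine (Finset.prod_le_prod (fun i _ => Finset.sum_nonneg fun x _ => (Real.exp_pos _).le)
        (fun i _ => hmgf M i)).trans ?_
      simp
    refine (Finset.sum_le_sum h2).trans ?_
    simp
  have hlow : Real.exp (b * l * N) * (S.card : ℝ) ^ N ≤ ∑ s ∈ Pi, Real.exp (Y s) := by
    have h1 : ∀ s ∈ Pi, Real.exp (b * l * N) * (1 - b * l * N + Y s) ≤ Real.exp (Y s) := by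
      intro s _
      have : Real.exp (Y s) = Real.exp (b * l * N) * Real.exp (Y s - b * l * N) := by
        rw [← Real.exp_add]; congr 1; ring
      rw [this]
      have := Real.add_one_le_exp (Y s - b * l * N)
      gcongr
      linarith
    refine le_trans ?_ (Finset.sum_le_sum h1)
    rw [← Finset.mul_sum, Finset.sum_add_distrib, Finset.sum_const, nsmul_eq_mul, hPc]
    have : b * l * N * (S.card : ℝ) ^ N ≤ ∑ s ∈ Pi, Y s := by
      rw [hY, ← Finset.mul_sum]
      calc _ = l * (b * N * (S.card : ℝ) ^ N) := by ring
        _ ≤ _ := by gcongr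
    gcongr
    linarith
  have h := hlow.trans hup
  rw [mul_pow, ← Real.exp_nat_mul] at h
  have h2 : (S.card : ℝ) ^ N * Real.exp (b * l * N) ≤
      (S.card : ℝ) ^ N * (2 ^ m * Real.exp (N * (a * l))) := by linarith
  have h3 := le_of_mul_le_mul_left h2 (by positivity)
  have h4 : (2 : ℝ) ^ m ≤ Real.exp m := by
    have : (2 : ℝ) ≤ Real.exp 1 := by linarith [Real.add_one_le_exp (1 : ℝ)]
    calc (2 : ℝ) ^ m ≤ Real.exp 1 ^ m := by gcongr
      _ = Real.exp m := by rw [← Real.exp_nat_mul, mul_one]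
  have h5 : Real.exp (b * l * N) ≤ Real.exp (m + N * (a * l)) := by
    rw [Real.exp_add]
    exact h3.trans (by gcongr)
  have h6 := Real.exp_le_exp.1 h5
  linarith

lemma mem_far {k kh d : ℕ} (hk : k = 2 * kh) (x t : Fin k → Bool) :
    (x, t) ∈ farPairs k kh d ↔ x ∈ wtStrings k kh ∧ t ∈ wtStrings k kh ∧ gg d x t = 1 := by
  have hkR : (k : ℝ) = 2 * kh := by exact_mod_cast hk
  have e : gg d x t = 1 ↔ kh + d ≤ hamDist x t := by
    unfold gg
    rw [ip_eq_hamDist, hkR]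
    constructor
    · intro h
      split_ifs at h with h1 h2
      · have : (kh : ℝ) + d ≤ hamDist x t := by linarith
        exact_mod_cast this
      · norm_num at h
      · norm_num at h
    · intro h
      have : (kh : ℝ) + d ≤ hamDist x t := by exact_mod_cast h
      rw [if_pos (by linarith)]
  rw [e]
  unfold farPairs wtStrings
  rw [Finset.mem_filter, Finset.mem_filter, Finset.mem_filter]
  simp only [Finset.mem_univ, true_and]

lemma mem_close {k kh d : ℕ} (hd : 0 < d) (hk : k = 2 * kh) (x t : Fin k → Bool) :
    (x, t) ∈ closePairs k kh d ↔ x ∈ wtStrings k kh ∧ t ∈ wtStrings k kh ∧ gg d x t = -1 := by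
  have hkR : (k : ℝ) = 2 * kh := by exact_mod_cast hk
  have hdR : (0 : ℝ) < d := by exact_mod_cast hd
  have e : gg d x t = -1 ↔ hamDist x t + d ≤ kh := by
    unfold gg
    rw [ip_eq_hamDist, hkR]
    constructor
    · intro h
      split_ifs at h with h1 h2
      · norm_num at h
      · have : (hamDist x t : ℝ) + d ≤ kh := by linarith
        exact_mod_cast this
      · norm_num at h
    · intro h
      have : (hamDist x t : ℝ) + d ≤ kh := by exact_mod_cast h
      rw [if_neg (by linarith), if_pos (by linarith)]
  rw [e]
  unfold closePairs wtStrings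
  rw [Finset.mem_filter, Finset.mem_filter, Finset.mem_filter]
  simp only [Finset.mem_univ, true_and]

lemma gg_cases {k d : ℕ} (x t : Fin k → Bool) :
    gg d x t = 1 ∨ gg d x t = -1 ∨ gg d x t = 0 := by
  unfold gg; split_ifs <;> simp

lemma far_card {k kh d : ℕ} (hd : 0 < d) (hk : k = 2 * kh) :
    ((farPairs k kh d).card : ℝ)
      = (∑ x ∈ wtStrings k kh, ∑ t ∈ wtStrings k kh, |gg d x t|) / 2 := by
  have h1 : farPairs k kh d
      = (wtStrings k kh ×ˢ wtStrings k kh).filter (fun p => gg d p.1 p.2 = 1) := by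
    ext ⟨x, t⟩
    rw [mem_far hk, Finset.mem_filter, Finset.mem_product, and_assoc]
  rw [h1, ← Finset.sum_boole, Finset.sum_product]
  have h2 : ∀ x t : Fin k → Bool,
      (if gg d x t = 1 then (1 : ℝ) else 0) = |gg d x t| / 2 + gg d x t / 2 := by
    intro x t
    rcases gg_cases (d := d) x t with h | h | h <;> rw [h] <;> norm_num
  simp_rw [h2, Finset.sum_add_distrib, ← Finset.sum_div]
  rw [Finset.sum_comm (f := fun x t => gg d x t)]
  simp_rw [sum_gg_zero hd hk]
  simp

lemma close_card {k kh d : ℕ} (hd : 0 < d) (hk : k = 2 * kh) :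
    ((closePairs k kh d).card : ℝ)
      = (∑ x ∈ wtStrings k kh, ∑ t ∈ wtStrings k kh, |gg d x t|) / 2 := by
  have h1 : closePairs k kh d
      = (wtStrings k kh ×ˢ wtStrings k kh).filter (fun p => gg d p.1 p.2 = -1) := by
    ext ⟨x, t⟩
    rw [mem_close hd hk, Finset.mem_filter, Finset.mem_product, and_assoc]
  rw [h1, ← Finset.sum_boole, Finset.sum_product]
  have h2 : ∀ x t : Fin k → Bool,
      (if gg d x t = -1 then (1 : ℝ) else 0) = |gg d x t| / 2 - gg d x t / 2 := by
    intro x t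
    rcases gg_cases (d := d) x t with h | h | h <;> rw [h] <;> norm_num
  simp_rw [h2, Finset.sum_sub_distrib, ← Finset.sum_div]
  rw [Finset.sum_comm (f := fun x t => gg d x t)]
  simp_rw [sum_gg_zero hd hk]
  simp

lemma sum_abs_gg_ge {k q d : ℕ} (hd : 0 < d) (hq : q = 250000 * d ^ 2) (hk : k = 4 * q) :
    (249 / 250) * ((wtStrings k (2 * q)).card : ℝ) ^ 2 ≤
      ∑ x ∈ wtStrings k (2 * q), ∑ t ∈ wtStrings k (2 * q), |gg d x t| := by
  set S := wtStrings k (2 * q) with hS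
  have hdR : (0 : ℝ) < d := by exact_mod_cast hd
  have h : ∀ x ∈ S, (249 / 250) * (S.card : ℝ) ≤ ∑ t ∈ S, |gg d x t| := by
    intro x hx
    have ha := anti hd hq hk x hx
    rw [← hS] at ha
    have hp : ∀ t ∈ S, 1 - (if |ip x t| < 4 * (d : ℝ) then (1 : ℝ) else 0) ≤ |gg d x t| := by
      intro t _
      split_ifs with hc
      · simp
      · rw [not_lt, le_abs] at hc
        unfold gg
        rcases hc with hc | hc
        · rw [if_neg (by linarith), if_pos (by linarith)]; norm_num
        · rw [if_pos (by linarith)]; norm_num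
    refine le_trans ?_ (Finset.sum_le_sum hp)
    rw [Finset.sum_sub_distrib, Finset.sum_boole]
    simp
    linarith
  have := Finset.sum_le_sum h
  rw [Finset.sum_const, nsmul_eq_mul] at this
  linarith

/-- Success probability of a deterministic protocol, in terms of `psi`. -/
lemma succ_eq {k kh d N m : ℕ} (hd : 0 < d) (hk : k = 2 * kh) (hN : 0 < N)
    (hW : 0 < ∑ x ∈ wtStrings k kh, ∑ t ∈ wtStrings k kh, |gg d x t|)
    (A : (Fin N → Fin k → Bool) → (Fin m → Bool))
    (B : (Fin m → Bool) → Fin N → (Fin k → Bool) → Bool) :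
    ∑ s : Fin N → Fin k → Bool, ∑ i : Fin N, ∑ t : Fin k → Bool,
        nuDist k kh d N s i t *
          (if B (A s) i t = decide (kh + d ≤ hamDist (s i) t) then (1 : ℝ) else 0)
      = (1 / N) * (1 / ∑ x ∈ wtStrings k kh, ∑ t ∈ wtStrings k kh, |gg d x t|) *
          (1 / ((wtStrings k kh).card : ℝ)) ^ (N - 1) *
        ∑ s ∈ Fintype.piFinset (fun _ : Fin N => wtStrings k kh), ∑ i,
          psi d (wtStrings k kh) (B (A s) i) (s i) := by
  have hf := far_card hd hk (d := d)
  have hc := close_card hd hk (d := d)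
  set W := ∑ x ∈ wtStrings k kh, ∑ t ∈ wtStrings k kh, |gg d x t| with hWdef
  set S := wtStrings k kh with hS
  have hmemS : ∀ y : Fin k → Bool, hamWt y = kh ↔ y ∈ S := by
    intro y; rw [hS, mem_wt]; rfl
  have key : ∀ (s : Fin N → Fin k → Bool) (i : Fin N) (t : Fin k → Bool),
      nuDist k kh d N s i t *
          (if B (A s) i t = decide (kh + d ≤ hamDist (s i) t) then (1 : ℝ) else 0)
      = if s ∈ Fintype.piFinset (fun _ : Fin N => S) then
          (if t ∈ S then (1 / N) * (1 / W) * (1 / (S.card : ℝ)) ^ (N - 1) *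
            ((|gg d (s i) t| + sg (B (A s) i t) * gg d (s i) t) / 2) else 0) else 0 := by
    intro s i t
    unfold nuDist
    rw [hf, hc]
    by_cases hsi : s i ∈ S
    swap
    · rw [if_neg (fun h => hsi ((mem_far hk _ _).1 h).1),
        if_neg (fun h => hsi ((mem_close hd hk _ _).1 h).1),
        if_neg (fun h => hsi (Fintype.mem_piFinset.1 h i))]
      simp
    by_cases ht : t ∈ S
    swap
    · rw [if_neg (fun h => ht ((mem_far hk _ _).1 h).2.1),
        if_neg (fun h => ht ((mem_close hd hk _ _).1 h).2.1), if_neg ht]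
      simp
    by_cases hs : s ∈ Fintype.piFinset (fun _ : Fin N => S)
    swap
    · rw [if_neg hs]
      have : ∃ j, s j ∉ S := by
        by_contra hcon
        push Not at hcon
        exact hs (Fintype.mem_piFinset.2 hcon)
      obtain ⟨j, hj⟩ := this
      have hji : j ≠ i := by rintro rfl; exact hj hsi
      rw [Finset.prod_eq_zero (i := j) (Finset.mem_filter.2 ⟨Finset.mem_univ _, hji⟩)
        (if_neg (fun h => hj ((hmemS _).1 h)))]
      simp
    rw [if_pos hs, if_pos ht]
    have hprod : ∏ j ∈ Finset.univ.filter (fun j => j ≠ i),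
        (if hamWt (s j) = kh then (1 : ℝ) / (S.card : ℝ) else 0)
        = (1 / (S.card : ℝ)) ^ (N - 1) := by
      rw [Finset.prod_congr rfl (g := fun _ => (1 : ℝ) / (S.card : ℝ))
        (fun j _ => if_pos ((hmemS _).2 (Fintype.mem_piFinset.1 hs j)))]
      rw [Finset.prod_const]
      congr 1
      rw [Finset.filter_ne', Finset.card_erase_of_mem (Finset.mem_univ _), Finset.card_univ,
        Fintype.card_fin]
    rw [hprod]
    have hmf : (s i, t) ∈ farPairs k kh d ↔ gg d (s i) t = 1 := by
      rw [mem_far hk]; exact ⟨fun h => h.2.2, fun h => ⟨hsi, ht, h⟩⟩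
    have hmc : (s i, t) ∈ closePairs k kh d ↔ gg d (s i) t = -1 := by
      rw [mem_close hd hk]; exact ⟨fun h => h.2.2, fun h => ⟨hsi, ht, h⟩⟩
    have hdec : decide (kh + d ≤ hamDist (s i) t) = decide (gg d (s i) t = 1) := by
      rw [decide_eq_decide, ← hmf]
      unfold farPairs
      rw [Finset.mem_filter]
      exact ⟨fun h => ⟨Finset.mem_univ _, (hmemS _).2 hsi, (hmemS _).2 ht, h⟩, fun h => h.2.2.2⟩
    rw [hdec]
    simp only [hmf, hmc]
    have hW' : W ≠ 0 := hW.ne'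
    rcases gg_cases (d := d) (s i) t with h | h | h
    · rw [h]
      have n1 : ¬ ((1 : ℝ) = -1) := by norm_num
      cases B (A s) i t <;> simp [sg, n1]
      left; left; ring
    · rw [h]
      have n1 : ¬ ((-1 : ℝ) = 1) := by norm_num
      cases B (A s) i t <;> simp [sg, n1]
      left; left; ring
    · rw [h]
      have n1 : ¬ ((0 : ℝ) = -1) := by norm_num
      simp
  simp_rw [key]
  rw [Finset.mul_sum, ← Finset.sum_filter_add_sum_filter_not Finset.univ
    (fun s => s ∈ Fintype.piFinset (fun _ : Fin N => S))]
  rw [Finset.sum_eq_zero (s := Finset.univ.filter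
    (fun s => ¬ s ∈ Fintype.piFinset (fun _ : Fin N => S))), add_zero]
  · rw [Finset.filter_univ_mem]
    refine Finset.sum_congr rfl fun s hs => ?_
    rw [Finset.mul_sum]
    refine Finset.sum_congr rfl fun i _ => ?_
    simp only [if_pos hs]
    rw [← Finset.sum_filter, Finset.filter_univ_mem, psi, Finset.mul_sum]
  · intro s hs
    simp [(Finset.mem_filter.1 hs).2]

theorem stmt_2 :
    ∃ c' : ℝ, 0 < c' ∧
      ∀ (ε : ℝ) (k khalf d N n m : ℕ),
        0 < ε → ε ≤ (1 / 1000 : ℝ) / 10 →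
        (k : ℝ) = 1 / ε ^ 2 → k = 2 * khalf → 0 < khalf →
        (d : ℝ) = (1 / 1000 : ℝ) / ε → 0 < d →
        n = 2 * N → 0 < N →
        ∀ (R : Type) [Fintype R] (ρ : R → ℝ),
          (∀ r, 0 ≤ ρ r) → (∑ r : R, ρ r) = 1 →
          ∀ (A : (Fin N → Fin k → Bool) → R → (Fin m → Bool))
            (B : (Fin m → Bool) → Fin N → (Fin k → Bool) → R → Bool),
            ((2 : ℝ) / 3 ≤
              ∑ r : R, ∑ s : Fin N → Fin k → Bool, ∑ i : Fin N, ∑ t : Fin k → Bool,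
                ρ r * nuDist k khalf d N s i t *
                  (if B (A s r) i t r = decide (khalf + d ≤ hamDist (s i) t)
                    then (1 : ℝ) else 0)) →
            c' * n / ε ^ 2 ≤ (m : ℝ) := by
  obtain ⟨c0, hc0, hmgf⟩ := mgf_exists
  refine ⟨(1 / 100) * c0, by positivity, ?_⟩
  intro ε k khalf d N n m hε _ hk hkk _ hdε hd hn hN R _ ρ hρ hρ1 A B hsucc
  have hkd : (k : ℝ) = 1000000 * (d : ℝ) ^ 2 := by
    rw [hk, hdε]; field_simp; norm_num
  have hkd' : k = 1000000 * d ^ 2 := by exact_mod_cast hkd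
  obtain ⟨q, hq⟩ : ∃ q, q = 250000 * d ^ 2 := ⟨_, rfl⟩
  have hk4 : k = 4 * q := by omega
  have hkh : khalf = 2 * q := by omega
  subst hkh
  obtain ⟨l, hl, hlk, hl2⟩ := hmgf d q k hd hq hk4
  have hWge := sum_abs_gg_ge hd hq hk4
  have hScard : (wtStrings k (2 * q)).card = Nat.centralBinom (2 * q) := card_wt hkk
  have hSpos' : 0 < (wtStrings k (2 * q)).card := by
    rw [hScard]; exact Nat.centralBinom_pos _
  have hSpos : (0 : ℝ) < (wtStrings k (2 * q)).card := by exact_mod_cast hSpos'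
  have hW : 0 < ∑ x ∈ wtStrings k (2 * q), ∑ t ∈ wtStrings k (2 * q), |gg d x t| :=
    lt_of_lt_of_le (by positivity) hWge
  -- fix the randomness
  obtain ⟨r, hr⟩ : ∃ r : R, (2 : ℝ) / 3 ≤ ∑ s : Fin N → Fin k → Bool, ∑ i : Fin N,
      ∑ t : Fin k → Bool, nuDist k (2 * q) d N s i t *
        (if B (A s r) i t r = decide (2 * q + d ≤ hamDist (s i) t) then (1 : ℝ) else 0) := by
    by_contra hcon
    push Not at hcon
    simp only [mul_assoc, ← Finset.mul_sum] at hsucc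
    obtain ⟨r0, hr0⟩ : ∃ r0, 0 < ρ r0 := by
      by_contra hz
      push Not at hz
      have : ∑ r, ρ r ≤ 0 := Finset.sum_nonpos fun r _ => hz r
      linarith
    have hlt : ∑ r, ρ r * (∑ s : Fin N → Fin k → Bool, ∑ i : Fin N,
        ∑ t : Fin k → Bool, nuDist k (2 * q) d N s i t *
        (if B (A s r) i t r = decide (2 * q + d ≤ hamDist (s i) t) then (1 : ℝ) else 0))
        < ∑ r, ρ r * (2 / 3) :=
      Finset.sum_lt_sum (fun r _ => mul_le_mul_of_nonneg_left (hcon r).le (hρ r))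
        ⟨r0, Finset.mem_univ _, mul_lt_mul_of_pos_left (hcon r0) hr0⟩
    rw [← Finset.sum_mul, hρ1] at hlt
    linarith
  rw [succ_eq hd hkk hN hW (fun s => A s r) (fun M i t => B M i t r)] at hr
  set S := wtStrings k (2 * q) with hS
  set W := ∑ x ∈ S, ∑ t ∈ S, |gg d x t| with hWd
  set Q := ∑ s ∈ Fintype.piFinset (fun _ : Fin N => S), ∑ i,
    psi d S (fun t => B (A s r) i t r) (s i) with hQ
  have hNR : (0 : ℝ) < N := by exact_mod_cast hN
  have hpow : (S.card : ℝ) ^ N = S.card * (S.card : ℝ) ^ (N - 1) := by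
    rw [← pow_succ']; congr 1; omega
  have hP : (0 : ℝ) < (S.card : ℝ) ^ (N - 1) := by positivity
  have hQge : (2 / 3) * (N * W * (S.card : ℝ) ^ (N - 1)) ≤ Q := by
    have e : (1 / (N : ℝ)) * (1 / W) * (1 / (S.card : ℝ)) ^ (N - 1) * Q
        = Q / (N * W * (S.card : ℝ) ^ (N - 1)) := by
      rw [one_div_pow]; field_simp
    rw [e, le_div_iff₀ (by positivity)] at hr
    exact hr
  have hQ2 : (64 / 100) * N * (S.card : ℝ) ^ N ≤
      ∑ s ∈ Fintype.piFinset (fun _ : Fin N => S), ∑ i,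
        psi d S (fun t => B (A s r) i t r) (s i) / (S.card : ℝ) := by
    simp_rw [← Finset.sum_div]
    rw [← hQ, le_div_iff₀ hSpos]
    refine le_trans ?_ hQge
    have h1 : (64 / 100) * (S.card : ℝ) ^ 2 ≤ (2 / 3) * W := by nlinarith
    have h2 := mul_le_mul_of_nonneg_right h1 (mul_pos hNR hP).le
    rw [hpow]
    linarith
  have hfin := union_bound S (Finset.card_pos.1 hSpos')
    (fun M i x => psi d S (fun t => B M i t r) x / (S.card : ℝ)) (fun s => A s r) l (62 / 100)
    (64 / 100) hl (fun M i => hl2 _) hQ2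
  have hnR : (n : ℝ) = 2 * N := by exact_mod_cast hn
  have e : (1 / 100) * c0 * n / ε ^ 2 = (2 / 100) * (c0 * k) * N := by
    rw [hk, hnR]; ring
  rw [e]
  refine le_trans ?_ hfin
  have := mul_le_mul_of_nonneg_right hlk hNR.le
  linarith
end

section
/- Let ε ∈ [1/n, 1/30] with s := 1/ε a positive integer, and let G = (V, E, w) be an S1-graph on n vertices, i.e., a weighted graph such that all edge weights satisfy w(e) ∈ [γ, 2γ) for some γ > ε², and the expansion constant Γ_G = min over nonempty S ⊆ V with |S| ≤ n/2 of |∂(S,S̄)|/|S| is at least 1/ε. Independently for each non-isolated vertex u, draw s independent uniform samples from the set of edges incident to u (each incident edge sampled with probability 1/d_u, with replacement), and let Y_u^v be the number of times edge (u,v) is sampled at u. For a subset S ⊆ V define the estimator I_G = Σ_{u∈S} [ δ_u − (d_u/s)·Σ_{v∈S, (u,v)∈E} Y_u^v·w(u,v) ]. Then for every S ⊆ V with |S| ≤ n/2 and cut weight w(S,S̄) ≤ 5: the expectation of I_G equals w(S,S̄), and with probability at least 8/9 one has |I_G − w(S,S̄)| ≤ 21·ε·w(S,S̄). -/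
open scoped Classical

/-- Unweighted degree of vertex `u` (number of incident edges). -/
noncomputable def udeg {n : ℕ} (w : Fin n → Fin n → ℝ) (u : Fin n) : ℕ :=
  (Finset.univ.filter (fun v => 0 < w u v)).card

/-- Weighted degree of vertex `u`. -/
noncomputable def wdeg {n : ℕ} (w : Fin n → Fin n → ℝ) (u : Fin n) : ℝ :=
  ∑ v, w u v

/-- Number of edges in the cut `(S, S̄)`. -/
noncomputable def cutE {n : ℕ} (w : Fin n → Fin n → ℝ) (S : Finset (Fin n)) : ℕ :=
  (Finset.univ.filter
    (fun p : Fin n × Fin n => p.1 ∈ S ∧ p.2 ∉ S ∧ 0 < w p.1 p.2)).card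

/-- Probability of the sample outcome `ω`, where independently each vertex `u` draws
`s` independent samples, each being a uniformly random neighbor of `u` (i.e., each edge
incident to `u` is sampled with probability `1 / d_u`).  Isolated vertices draw the
dummy sample `u` itself with probability `1`. -/
noncomputable def sampleProb {n s : ℕ} (w : Fin n → Fin n → ℝ)
    (ω : Fin n → Fin s → Fin n) : ℝ :=
  ∏ u, ∏ j,
    (if udeg w u = 0 then (if ω u j = u then (1 : ℝ) else 0)
      else (if 0 < w u (ω u j) then 1 / (udeg w u : ℝ) else 0))

/-- `Y_u^v`: the number of times the edge `(u, v)` is sampled at `u`. -/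
noncomputable def Ycount {n s : ℕ} (ω : Fin n → Fin s → Fin n) (u v : Fin n) : ℕ :=
  (Finset.univ.filter (fun j : Fin s => ω u j = v)).card

/-- The estimator `I_G` for the weight of the cut `(S, S̄)`. -/
noncomputable def estI {n s : ℕ} (w : Fin n → Fin n → ℝ) (S : Finset (Fin n))
    (ω : Fin n → Fin s → Fin n) : ℝ :=
  ∑ u ∈ S, (wdeg w u - (udeg w u : ℝ) / (s : ℝ) *
    ∑ v ∈ S, (Ycount ω u v : ℝ) * w u v)

section ProductLaw
variable {ι α : Type} [Fintype ι] [DecidableEq ι] [Fintype α]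

lemma pl_E1 (p f : ι → α → ℝ) (hp : ∀ i, ∑ a, p i a = 1) (i : ι) :
    ∑ x : ι → α, (∏ j, p j (x j)) * f i (x i) = ∑ a, p i a * f i a := by
  have h := Fintype.prod_sum (fun j a => p j a * (if j = i then f i a else 1))
  have h1 : ∀ x : ι → α, ∏ j, (p j (x j) * (if j = i then f i (x j) else 1))
      = (∏ j, p j (x j)) * f i (x i) := by
    intro x
    rw [Finset.prod_mul_distrib, Finset.prod_ite_eq' Finset.univ i (fun j => f i (x j))]
    simp
  simp only [h1] at h
  rw [← h, Finset.prod_eq_single i]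
  · simp
  · intro b _ hb
    simp [hb, hp]
  · simp

lemma pl_E2 (p f : ι → α → ℝ) (hp : ∀ i, ∑ a, p i a = 1) (i k : ι) (hik : i ≠ k)
    (hf : ∑ a, p i a * f i a = 0) :
    ∑ x : ι → α, (∏ j, p j (x j)) * (f i (x i) * f k (x k)) = 0 := by
  have h := Fintype.prod_sum
    (fun j a => p j a * ((if j = i then f i a else 1) * (if j = k then f k a else 1)))
  have h1 : ∀ x : ι → α, ∏ j, (p j (x j) * ((if j = i then f i (x j) else 1)
        * (if j = k then f k (x j) else 1)))
      = (∏ j, p j (x j)) * (f i (x i) * f k (x k)) := by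
    intro x
    rw [Finset.prod_mul_distrib, Finset.prod_mul_distrib,
      Finset.prod_ite_eq' Finset.univ i (fun j => f i (x j)),
      Finset.prod_ite_eq' Finset.univ k (fun j => f k (x j))]
    simp
  simp only [h1] at h
  rw [← h]
  apply Finset.prod_eq_zero (Finset.mem_univ i)
  simpa [hik] using hf

lemma pl_total (p : ι → α → ℝ) (hp : ∀ i, ∑ a, p i a = 1) :
    ∑ x : ι → α, (∏ j, p j (x j)) = 1 := by
  rw [← Fintype.prod_sum]; simp [hp]

lemma pl_mean (p f : ι → α → ℝ) (hp : ∀ i, ∑ a, p i a = 1)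
    (hf : ∀ i, ∑ a, p i a * f i a = 0) :
    ∑ x : ι → α, (∏ j, p j (x j)) * (∑ i, f i (x i)) = 0 := by
  simp only [Finset.mul_sum]
  rw [Finset.sum_comm]
  apply Finset.sum_eq_zero
  intro i _
  rw [pl_E1 p f hp i, hf]

lemma pl_var (p f : ι → α → ℝ) (hp : ∀ i, ∑ a, p i a = 1)
    (hf : ∀ i, ∑ a, p i a * f i a = 0) :
    ∑ x : ι → α, (∏ j, p j (x j)) * (∑ i, f i (x i)) ^ 2 = ∑ i, ∑ a, p i a * f i a ^ 2 := by
  have hsq : ∀ x : ι → α, (∑ i, f i (x i)) ^ 2 = ∑ i, ∑ k, f i (x i) * f k (x k) := fun x => by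
    rw [sq, Finset.sum_mul_sum]
  simp only [hsq, Finset.mul_sum]
  rw [Finset.sum_comm]
  apply Finset.sum_congr rfl
  intro i _
  rw [Finset.sum_comm, Finset.sum_eq_single i]
  · simp only [sq]
    exact pl_E1 p (fun i a => f i a * f i a) hp i
  · intro k _ hk
    exact pl_E2 p f hp i k hk.symm (hf i)
  · simp

end ProductLaw

/-- law of one sample at `u` -/
noncomputable def pOne {n : ℕ} (w : Fin n → Fin n → ℝ) (u v : Fin n) : ℝ :=
  if udeg w u = 0 then (if v = u then (1 : ℝ) else 0)
      else (if 0 < w u v then 1 / (udeg w u : ℝ) else 0)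

lemma pOne_nonneg {n : ℕ} (w : Fin n → Fin n → ℝ) (u v : Fin n) : 0 ≤ pOne w u v := by
  unfold pOne; split_ifs <;> positivity

lemma pOne_sum {n : ℕ} (w : Fin n → Fin n → ℝ) (u : Fin n) : ∑ v, pOne w u v = 1 := by
  unfold pOne
  split_ifs with h
  · simp
  · rw [← Finset.sum_filter, Finset.sum_const, nsmul_eq_mul]
    have h' : (udeg w u : ℝ) ≠ 0 := by exact_mod_cast h
    change (udeg w u : ℝ) * _ = 1
    field_simp

lemma udeg_zero {n : ℕ} (w : Fin n → Fin n → ℝ) (hnonneg : ∀ u v, 0 ≤ w u v) (u v : Fin n)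
    (h : udeg w u = 0) : w u v = 0 := by
  unfold udeg at h
  rw [Finset.card_eq_zero, Finset.filter_eq_empty_iff] at h
  exact le_antisymm (not_lt.mp (h (Finset.mem_univ v))) (hnonneg u v)

lemma pOne_mul {n : ℕ} (w : Fin n → Fin n → ℝ) (hnonneg : ∀ u v, 0 ≤ w u v) (u v : Fin n) :
    udeg w u * (pOne w u v * w u v) = w u v := by
  by_cases h : udeg w u = 0
  · simp [udeg_zero w hnonneg u v h]
  · have h' : (udeg w u : ℝ) ≠ 0 := by exact_mod_cast h
    rcases (hnonneg u v).lt_or_eq with h2 | h2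
    · simp only [pOne, h, h2, if_true, if_false]; field_simp
    · simp [← h2]

lemma sampleProb_eq {n s : ℕ} (w : Fin n → Fin n → ℝ) (x : Fin n × Fin s → Fin n) :
    sampleProb w (fun u j => x (u, j)) = ∏ i, pOne w i.1 (x i) := by
  rw [Fintype.prod_prod_type]; rfl

lemma sum_curry {n s : ℕ} (F : (Fin n → Fin s → Fin n) → ℝ) :
    ∑ ω, F ω = ∑ x : Fin n × Fin s → Fin n, F (fun u j => x (u, j)) :=
  (Equiv.sum_comp (Equiv.curry (Fin n) (Fin s) (Fin n)) F).symm

/-- centred contribution -/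
noncomputable def fOne {n : ℕ} (s : ℕ) (w : Fin n → Fin n → ℝ) (S : Finset (Fin n))
    (u v : Fin n) : ℝ :=
  if u ∈ S then (1 / (s : ℝ)) * ((∑ v ∈ S, w u v) - udeg w u * (if v ∈ S then w u v else 0)) else 0

lemma cutW_eq {n : ℕ} (w : Fin n → Fin n → ℝ) (S : Finset (Fin n)) :
    cutW w S = ∑ u ∈ S, ∑ v ∈ Sᶜ, w u v := by
  unfold cutW
  rw [← Finset.sum_product']
  apply Finset.sum_congr _ (fun _ _ => rfl)
  ext p; simp

lemma cutE_eq {n : ℕ} (w : Fin n → Fin n → ℝ) (S : Finset (Fin n)) :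
    (cutE w S : ℝ) = ∑ u ∈ S, ∑ v ∈ Sᶜ, (if 0 < w u v then (1 : ℝ) else 0) := by
  unfold cutE
  rw [← Finset.sum_product', ← Finset.sum_filter, Finset.card_eq_sum_ones]
  push_cast
  apply Finset.sum_congr _ (fun _ _ => rfl)
  ext p; simp [and_assoc]

lemma est_eq {n s : ℕ} (hs : 0 < s) (w : Fin n → Fin n → ℝ) (S : Finset (Fin n))
    (x : Fin n × Fin s → Fin n) :
    estI w S (fun u j => x (u, j)) - cutW w S = ∑ i : Fin n × Fin s, fOne s w S i.1 (x i) := by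
  rw [Fintype.sum_prod_type, cutW_eq, estI, ← Finset.sum_sub_distrib]
  rw [← Finset.sum_subset (Finset.subset_univ S)]
  · apply Finset.sum_congr rfl
    intro u hu
    have hY : ∑ v ∈ S, (Ycount (fun u j => x (u, j)) u v : ℝ) * w u v
        = ∑ j, if x (u, j) ∈ S then w u (x (u, j)) else 0 := by
      have : ∀ v, (Ycount (fun u j => x (u, j)) u v : ℝ) * w u v
          = ∑ j, if x (u, j) = v then w u v else 0 := by
        intro v
        rw [← Finset.sum_filter, Finset.sum_const, nsmul_eq_mul]; rfl
      simp only [this]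
      rw [Finset.sum_comm]
      apply Finset.sum_congr rfl
      intro j _
      rw [Finset.sum_ite_eq]
    have hw : wdeg w u = ∑ v ∈ S, w u v + ∑ v ∈ Sᶜ, w u v := by
      rw [Finset.sum_add_sum_compl]; rfl
    have hs' : (s : ℝ) ≠ 0 := by positivity
    rw [hY, hw]
    simp only [fOne, hu, if_true]
    rw [← Finset.mul_sum, Finset.sum_sub_distrib, ← Finset.mul_sum]
    simp only [Finset.sum_const, Finset.card_univ, Fintype.card_fin, nsmul_eq_mul]
    field_simp
    ring
  · intro u _ hu
    simp [fOne, hu]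

lemma fOne_E1 {n : ℕ} (w : Fin n → Fin n → ℝ) (hnonneg : ∀ u v, 0 ≤ w u v)
    (S : Finset (Fin n)) (u : Fin n) :
    ∑ v, pOne w u v * (udeg w u * (if v ∈ S then w u v else 0)) = ∑ v ∈ S, w u v := by
  rw [← Finset.sum_subset (Finset.subset_univ S)]
  · apply Finset.sum_congr rfl
    intro v hv
    rw [if_pos hv]
    linarith [pOne_mul w hnonneg u v]
  · intro v _ hv; simp [hv]

lemma fOne_mean {n : ℕ} (s : ℕ) (w : Fin n → Fin n → ℝ) (hnonneg : ∀ u v, 0 ≤ w u v)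
    (S : Finset (Fin n)) (u : Fin n) : ∑ v, pOne w u v * fOne s w S u v = 0 := by
  unfold fOne
  split_ifs with h
  · have : ∀ v, pOne w u v * ((1 / (s : ℝ)) * ((∑ v ∈ S, w u v) -
        udeg w u * (if v ∈ S then w u v else 0)))
        = (1 / (s : ℝ)) * (pOne w u v * (∑ v ∈ S, w u v)
          - pOne w u v * (udeg w u * (if v ∈ S then w u v else 0))) := fun v => by ring
    simp only [this]
    rw [← Finset.mul_sum, Finset.sum_sub_distrib, fOne_E1 w hnonneg, ← Finset.sum_mul, pOne_sum]
    ring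
  · simp

lemma fOne_var {n : ℕ} (s : ℕ) (w : Fin n → Fin n → ℝ) (hnonneg : ∀ u v, 0 ≤ w u v)
    (S : Finset (Fin n)) (u : Fin n) (hu : u ∈ S) :
    ∑ v, pOne w u v * fOne s w S u v ^ 2 ≤ (1 / (s : ℝ)) ^ 2 * (udeg w u * ∑ v ∈ S, w u v ^ 2) := by
  set A := ∑ v ∈ S, w u v with hA
  have h2 : ∑ v, pOne w u v * (udeg w u * (if v ∈ S then w u v else 0)) ^ 2
      = udeg w u * ∑ v ∈ S, w u v ^ 2 := by
    rw [← Finset.sum_subset (Finset.subset_univ S), Finset.mul_sum]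
    · apply Finset.sum_congr rfl
      intro v hv
      rw [if_pos hv]
      have := pOne_mul w hnonneg u v
      calc _ = (udeg w u * (pOne w u v * w u v)) * (udeg w u * w u v) := by ring
        _ = _ := by rw [this]; ring
    · intro v _ hv; simp [hv]
  have : ∀ v, pOne w u v * fOne s w S u v ^ 2
      = (1 / (s : ℝ)) ^ 2 * (pOne w u v * A ^ 2
        - 2 * A * (pOne w u v * (udeg w u * (if v ∈ S then w u v else 0)))
        + pOne w u v * (udeg w u * (if v ∈ S then w u v else 0)) ^ 2) := by
    intro v
    simp only [fOne, hu, if_true, ← hA]; ring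
  simp only [this]
  rw [← Finset.mul_sum, Finset.sum_add_distrib, Finset.sum_sub_distrib, ← Finset.mul_sum,
    fOne_E1 w hnonneg, ← Finset.sum_mul, pOne_sum, h2, ← hA]
  gcongr
  nlinarith [sq_nonneg A]

lemma udeg_sum_le {n : ℕ} (w : Fin n → Fin n → ℝ) (S : Finset (Fin n)) :
    ∑ u ∈ S, (udeg w u : ℝ) ≤ (S.card : ℝ) ^ 2 + cutE w S := by
  rw [cutE_eq]
  have : ∀ u ∈ S, (udeg w u : ℝ) ≤ S.card + ∑ v ∈ Sᶜ, (if 0 < w u v then (1 : ℝ) else 0) := by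
    intro u _
    have h : (udeg w u : ℝ) = ∑ v, (if 0 < w u v then (1 : ℝ) else 0) := by
      simp [udeg]
    rw [h, ← Finset.sum_add_sum_compl S]
    gcongr
    calc _ ≤ ∑ v ∈ S, (1 : ℝ) := Finset.sum_le_sum (fun v _ => by split_ifs <;> norm_num)
      _ = _ := by simp
  calc _ ≤ _ := Finset.sum_le_sum this
    _ = _ := by rw [Finset.sum_add_distrib]; simp [sq]

lemma arith_kc {ε γ k m c : ℝ} (hε : 0 < ε) (hγ0 : 0 < γ) (hkm : k ≤ ε * m) (hmc : γ * m ≤ c) :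
    γ * k ≤ ε * c := by
  have h1 := mul_le_mul_of_nonneg_left hkm hγ0.le
  have h2 := mul_le_mul_of_nonneg_left hmc hε.le
  linarith

lemma arith_k {ε γ k c : ℝ} (hε : 0 < ε) (hk : 0 < k) (hγ : ε ^ 2 < γ) (hkc : γ * k ≤ ε * c)
    (hc : c ≤ 5) : ε * k ≤ 5 := by
  have h1 := mul_le_mul_of_nonneg_right hγ.le hk.le
  have h2 := mul_le_mul_of_nonneg_left hc hε.le
  have h3 : ε * (ε * k) ≤ ε * 5 := by linarith
  exact le_of_mul_le_mul_left h3 hε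

lemma arith_V {ε γ k m c : ℝ} (hε : 0 < ε) (hγ0 : 0 < γ) (hk : 0 < k) (hc : 0 < c)
    (hkc : γ * k ≤ ε * c) (hmc : γ * m ≤ c) (hm : 0 ≤ m) (hεk : ε * k ≤ 5) :
    ε * (4 * γ ^ 2 * k) * (k ^ 2 + m) ≤ 49 * ε ^ 2 * c ^ 2 := by
  have a2 : (γ * k) * (γ * m) ≤ (ε * c) * c := by gcongr
  have a3 : (γ * k) ^ 2 * (ε * k) ≤ (ε * c) ^ 2 * 5 := by gcongr
  have a4 : ε * ((γ * k) * (γ * m)) ≤ ε * ((ε * c) * c) := by gcongr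
  have : 0 ≤ ε ^ 2 * c ^ 2 := by positivity
  calc _ = 4 * ((γ * k) ^ 2 * (ε * k)) + 4 * (ε * ((γ * k) * (γ * m))) := by ring
    _ ≤ 4 * ((ε * c) ^ 2 * 5) + 4 * (ε * ((ε * c) * c)) := by linarith
    _ = 24 * (ε ^ 2 * c ^ 2) := by ring
    _ ≤ 49 * (ε ^ 2 * c ^ 2) := by linarith
    _ = _ := by ring

set_option maxHeartbeats 1000000 in
theorem stmt_3 (n s : ℕ) (ε γ : ℝ) (w : Fin n → Fin n → ℝ)
    (hεlo : 1 / (n : ℝ) ≤ ε) (hεhi : ε ≤ 1 / 30)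
    (hspos : 0 < s) (hs : (s : ℝ) = 1 / ε)
    (hsym : ∀ u v, w u v = w v u) (hnonneg : ∀ u v, 0 ≤ w u v)
    (hdiag : ∀ u, w u u = 0)
    (hγ : ε ^ 2 < γ)
    (hweights : ∀ u v, 0 < w u v → γ ≤ w u v ∧ w u v < 2 * γ)
    (hexp : ∀ S : Finset (Fin n), S.Nonempty → (S.card : ℝ) ≤ (n : ℝ) / 2 →
      (S.card : ℝ) / ε ≤ (cutE w S : ℝ))
    (S : Finset (Fin n)) (hScard : (S.card : ℝ) ≤ (n : ℝ) / 2)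
    (hcut : cutW w S ≤ 5) :
    (∑ ω : Fin n → Fin s → Fin n, sampleProb w ω * estI w S ω) = cutW w S ∧
      (8 : ℝ) / 9 ≤
        ∑ ω ∈ Finset.univ.filter (fun ω : Fin n → Fin s → Fin n =>
            |estI w S ω - cutW w S| ≤ 21 * ε * cutW w S),
          sampleProb w ω := by
  have hs0 : (0 : ℝ) < s := by exact_mod_cast hspos
  have hε : 0 < ε := by
    rw [hs] at hs0; exact one_div_pos.mp hs0
  have hsε : 1 / (s : ℝ) = ε := by rw [hs]; simp
  have hγ0 : 0 < γ := lt_trans (by positivity) hγ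
  have hp : ∀ i : Fin n × Fin s, ∑ a, pOne w i.1 a = 1 := fun i => pOne_sum w i.1
  have hf : ∀ i : Fin n × Fin s, ∑ a, pOne w i.1 a * fOne s w S i.1 a = 0 :=
    fun i => fOne_mean s w hnonneg S i.1
  have htot : ∑ ω : Fin n → Fin s → Fin n, sampleProb w ω = 1 := by
    rw [sum_curry]; simp only [sampleProb_eq]
    exact pl_total (fun i : Fin n × Fin s => pOne w i.1) hp
  have hmean : ∑ ω : Fin n → Fin s → Fin n, sampleProb w ω * (estI w S ω - cutW w S) = 0 := by
    rw [sum_curry]; simp only [sampleProb_eq, est_eq hspos]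
    exact pl_mean (fun i : Fin n × Fin s => pOne w i.1) (fun i => fOne s w S i.1) hp hf
  have hvar : ∑ ω : Fin n → Fin s → Fin n, sampleProb w ω * (estI w S ω - cutW w S) ^ 2
      = ∑ i : Fin n × Fin s, ∑ a, pOne w i.1 a * fOne s w S i.1 a ^ 2 := by
    rw [sum_curry]; simp only [sampleProb_eq, est_eq hspos]
    exact pl_var (fun i : Fin n × Fin s => pOne w i.1) (fun i => fOne s w S i.1) hp hf
  have hP0 : ∀ ω : Fin n → Fin s → Fin n, 0 ≤ sampleProb w ω := fun ω =>
    Finset.prod_nonneg (fun u _ => Finset.prod_nonneg (fun j _ => pOne_nonneg w u (ω u j)))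
  refine ⟨?_, ?_⟩
  · simp only [mul_sub] at hmean
    rw [Finset.sum_sub_distrib, ← Finset.sum_mul, htot] at hmean
    linarith
  rcases S.eq_empty_or_nonempty with rfl | hne
  · have : ∀ ω : Fin n → Fin s → Fin n, |estI w ∅ ω - cutW w ∅| ≤ 21 * ε * cutW w ∅ := by
      intro ω; simp [estI, cutW]
    rw [Finset.filter_true_of_mem (fun ω _ => this ω), htot]
    norm_num
  set c := cutW w S with hc
  set k : ℝ := (S.card : ℝ) with hk
  set m : ℝ := (cutE w S : ℝ) with hm
  have hk1 : 0 < k := by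
    rw [hk]; exact_mod_cast hne.card_pos
  have hkm : k ≤ ε * m := by
    have := hexp S hne hScard
    rw [div_le_iff₀ hε] at this; linarith
  have hmc : γ * m ≤ c := by
    rw [hm, hc, cutE_eq, cutW_eq, Finset.mul_sum]
    refine Finset.sum_le_sum fun u _ => ?_
    rw [Finset.mul_sum]
    refine Finset.sum_le_sum fun v _ => ?_
    split_ifs with h
    · linarith [(hweights u v h).1]
    · rw [mul_zero]; exact hnonneg u v
  have hkc : γ * k ≤ ε * c := arith_kc hε hγ0 hkm hmc
  have hc0 : 0 < c := by
    have : 0 < γ * k := mul_pos hγ0 hk1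
    exact pos_of_mul_pos_right (lt_of_lt_of_le this hkc) hε.le
  have hεk : ε * k ≤ 5 := arith_k hε hk1 hγ hkc hcut
  have hw2 : ∀ u v, w u v ^ 2 ≤ 4 * γ ^ 2 := by
    intro u v
    rcases (hnonneg u v).lt_or_eq with h | h
    · have := (hweights u v h).2
      calc w u v ^ 2 ≤ (2 * γ) ^ 2 := pow_le_pow_left₀ h.le this.le 2
        _ = _ := by ring
    · have h4 : (0 : ℝ) ≤ 4 * γ ^ 2 := by positivity
      rw [← h]; linarith
  have hV : ∑ i : Fin n × Fin s, ∑ a, pOne w i.1 a * fOne s w S i.1 a ^ 2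
      ≤ ε * (4 * γ ^ 2 * k) * (k ^ 2 + m) := by
    rw [Fintype.sum_prod_type]
    simp only [Finset.sum_const, Finset.card_univ, Fintype.card_fin, nsmul_eq_mul]
    rw [← Finset.sum_subset (Finset.subset_univ S)]
    · calc _ ≤ ∑ u ∈ S, ε * (4 * γ ^ 2 * k) * (udeg w u : ℝ) := by
            refine Finset.sum_le_sum fun u hu => ?_
            have h1 := fOne_var s w hnonneg S u hu
            have h2 : ∑ v ∈ S, w u v ^ 2 ≤ k * (4 * γ ^ 2) := by
              calc _ ≤ ∑ v ∈ S, 4 * γ ^ 2 := Finset.sum_le_sum fun v _ => hw2 u v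
                _ = _ := by simp [hk]
            have hsε' : (s : ℝ) * ε = 1 := by rw [hs]; field_simp
            rw [hsε] at h1
            calc _ ≤ (s : ℝ) * (ε ^ 2 * (udeg w u * ∑ v ∈ S, w u v ^ 2)) := by gcongr
              _ ≤ (s : ℝ) * (ε ^ 2 * (udeg w u * (k * (4 * γ ^ 2)))) := by gcongr
              _ = (s * ε) * (ε * (4 * γ ^ 2 * k) * (udeg w u : ℝ)) := by ring
              _ = _ := by rw [hsε']; ring
        _ = ε * (4 * γ ^ 2 * k) * ∑ u ∈ S, (udeg w u : ℝ) := by rw [Finset.mul_sum]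
        _ ≤ _ := by
          have h4 : (0 : ℝ) ≤ 4 * γ ^ 2 := by positivity
          exact mul_le_mul_of_nonneg_left (udeg_sum_le w S)
            (mul_nonneg hε.le (mul_nonneg h4 hk1.le))
    · intro u _ hu
      simp [fOne, hu]
  have hV2 : ε * (4 * γ ^ 2 * k) * (k ^ 2 + m) ≤ 49 * ε ^ 2 * c ^ 2 :=
    arith_V hε hγ0 hk1 hc0 hkc hmc (Nat.cast_nonneg _) hεk
  set t := 21 * ε * c with ht
  have ht0 : 0 < t := by positivity
  have hsplit := Finset.sum_filter_add_sum_filter_not Finset.univ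
    (fun ω : Fin n → Fin s → Fin n => |estI w S ω - c| ≤ t) (sampleProb w)
  rw [htot] at hsplit
  have hbad : (∑ ω ∈ Finset.univ.filter (fun ω : Fin n → Fin s → Fin n =>
      ¬ |estI w S ω - c| ≤ t), sampleProb w ω) * t ^ 2 ≤ 49 * ε ^ 2 * c ^ 2 := by
    refine le_trans ?_ (le_trans (hvar.le.trans hV) hV2)
    rw [Finset.sum_mul]
    refine le_trans (Finset.sum_le_sum (g := fun ω => sampleProb w ω * (estI w S ω - c) ^ 2) ?_)
      (Finset.sum_le_sum_of_subset_of_nonneg (Finset.subset_univ _) ?_)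
    · intro ω hω
      rw [Finset.mem_filter, not_le] at hω
      refine mul_le_mul_of_nonneg_left ?_ (hP0 ω)
      rw [← sq_abs (estI w S ω - c)]
      exact pow_le_pow_left₀ ht0.le hω.2.le 2
    · intro ω _ _
      exact mul_nonneg (hP0 ω) (sq_nonneg _)
  have h9 : (49 : ℝ) * ε ^ 2 * c ^ 2 = 1 / 9 * t ^ 2 := by rw [ht]; ring
  rw [h9] at hbad
  have := le_of_mul_le_mul_right hbad (by positivity)
  linarith
end
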